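/- Let T be a self-adjoint operator in a complex Hilbert space H whose essential spectrum is contained in pairwise disjoint intervals Δ_k = [α_{2k−1}, α_{2k}], k ∈ ℤ, whose gaps Λ_k = (α_{2k}, α_{2k+1}) satisfy α_{2k+1} − α_{2k} ≥ 2^{1−p}·b₁·|α_{2k+1} + α_{2k}|^p for some b₁ > 0 and p ∈ [0,1); outside the intervals Δ_k the operator T has only discrete spectrum, and each gap Λ_k contains at most m eigenvalues of T counted with multiplicity, where m ∈ ℕ does not depend on k. Let B be p-subordinate to T with subordination bound b' < b₁, and set A = T + B on D(T). Then: (i) for every h > b' the spectrum of A outside a sufficiently large disk is contained in the double parabola P_{p,h}; (ii) for every δ ∈ (0, b₁ − b') there exist N ∈ ℕ and a constant C independent of k such that for every |k| ≥ N the vertical strip Ω_k = {λ ∈ ℂ : |Re λ − r_k| ≤ δ|r_k|^p}, where r_k = (α_{2k} + α_{2k+1})/2, contains no points of the spectrum of A other than eigenvalues of total algebraic multiplicity at most C·m. -/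

import Mathlib

noncomputable section

variable {H : Type*} [NormedAddCommGroup H] [InnerProductSpace ℂ H] [CompleteSpace H]

/-- `R` is a two-sided bounded inverse of `T - z` (so `z` is in the resolvent set of `T`). -/
def IsResolventOf (T : H →ₗ.[ℂ] H) (z : ℂ) (R : H →L[ℂ] H) : Prop :=
  (∀ x : T.domain, R (T x - z • (x : H)) = (x : H)) ∧
  (∀ y : H, ∃ hy : R y ∈ T.domain, T ⟨R y, hy⟩ - z • (R y) = y)

/-- The resolvent set of the (in general unbounded) operator `T`. -/
def pmResolventSet (T : H →ₗ.[ℂ] H) : Set ℂ := {z | ∃ R, IsResolventOf T z R}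

/-- The spectrum of the (in general unbounded) operator `T`. -/
def pmSpectrum (T : H →ₗ.[ℂ] H) : Set ℂ := (pmResolventSet T)ᶜ

/-- The set of constants `b` for which `B` is `p`-subordinate to `T` with some admissible
constant `M ≥ 0` (with `M = 0` required when `p = 0`); the subordination bound `b'` is the
infimum of this set. -/
def SubordSet (T B : H →ₗ.[ℂ] H) (hle : T.domain ≤ B.domain) (p : ℝ) : Set ℝ :=
  {b | 0 < b ∧ ∃ M : ℝ, 0 ≤ M ∧ (p = 0 → M = 0) ∧
    ∀ x : T.domain, ‖B ⟨(x : H), hle x.2⟩‖ ≤ b * ‖T x‖ ^ p * ‖(x : H)‖ ^ (1 - p) + M * ‖(x : H)‖}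

/-- The operator sum `A = T + B` defined on the domain of `T`. -/
def pmSum (T B : H →ₗ.[ℂ] H) (hle : T.domain ≤ B.domain) : H →ₗ.[ℂ] H :=
  ⟨T.domain, T.toFun + B.toFun.comp (Submodule.inclusion hle)⟩

/-- The eigenspace of the unbounded operator `T` for the eigenvalue `z`. -/
def pmEigenspace (T : H →ₗ.[ℂ] H) (z : ℂ) : Submodule ℂ H :=
  (LinearMap.ker (T.toFun - z • T.domain.subtype)).map T.domain.subtype

/-- The generalized eigenvectors of order `≤ n` of `A` at `z`. -/
def pmGenEig (A : H →ₗ.[ℂ] H) (z : ℂ) : ℕ → Set H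
  | 0 => {0}
  | n + 1 => {x | ∃ hx : x ∈ A.domain, A ⟨x, hx⟩ - z • x ∈ pmGenEig A z n}

set_option linter.unusedSectionVars false


/-- `R` is a bounded two-sided inverse of `L`. -/
def BInv (D : Submodule ℂ H) (L : D →ₗ[ℂ] H) (R : H →L[ℂ] H) : Prop :=
  (∀ x : D, R (L x) = (x : H)) ∧ ∀ y : H, ∃ hy : R y ∈ D, L ⟨R y, hy⟩ = y

theorem binv_pert (D : Submodule ℂ H) (L C : D →ₗ[ℂ] H) (R : H →L[ℂ] H) (hR : BInv D L R)
    (q : ℝ) (hq0 : 0 ≤ q) (hq : q < 1) (hC : ∀ x, ‖C x‖ ≤ q * ‖L x‖) :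
    ∃ R', BInv D (L + C) R' := by
  obtain ⟨h1, h2⟩ := hR
  have hmem : ∀ y, R y ∈ D := fun y => (h2 y).1
  have hL : ∀ y, L ⟨R y, hmem y⟩ = y := fun y => (h2 y).2
  let K0 : H →ₗ[ℂ] H := C ∘ₗ (LinearMap.codRestrict D (R : H →ₗ[ℂ] H) hmem)
  have hK0 : ∀ y, K0 y = C ⟨R y, hmem y⟩ := fun y => rfl
  let K : H →L[ℂ] H := K0.mkContinuous q (fun y => by
    have := hC ⟨R y, hmem y⟩
    rwa [hL] at this)
  have hK : ∀ y, K y = C ⟨R y, hmem y⟩ := fun y => rfl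
  have hKn : ‖-K‖ < 1 := by
    rw [norm_neg]
    exact lt_of_le_of_lt (LinearMap.mkContinuous_norm_le _ hq0 _) hq
  let U := Units.oneSub (-K) hKn
  have hU : ∀ y, (U : H →L[ℂ] H) y = y + K y := fun y => by
    simp [U]
  have hUi : ∀ y, (U : H →L[ℂ] H) ((↑U⁻¹ : H →L[ℂ] H) y) = y := fun y => by
    have := U.mul_inv
    exact congrArg (fun f : H →L[ℂ] H => f y) this
  have hiU : ∀ y, (↑U⁻¹ : H →L[ℂ] H) ((U : H →L[ℂ] H) y) = y := fun y => by
    have := U.inv_mul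
    exact congrArg (fun f : H →L[ℂ] H => f y) this
  refine ⟨R ∘L (↑U⁻¹ : H →L[ℂ] H), ?_, ?_⟩
  · intro x
    have : (L + C) x = (U : H →L[ℂ] H) (L x) := by
      rw [hU, hK, LinearMap.add_apply]
      congr 2
      exact Subtype.ext (h1 x).symm
    rw [this, ContinuousLinearMap.comp_apply, hiU, h1]
  · intro y
    refine ⟨hmem _, ?_⟩
    rw [LinearMap.add_apply]
    have e1 := hL ((↑U⁻¹ : H →L[ℂ] H) y)
    have e2 := hK ((↑U⁻¹ : H →L[ℂ] H) y)
    have e3 := hUi y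
    rw [hU] at e3
    rw [e2] at e3
    nth_rewrite 1 [← e1] at e3
    exact e3

theorem binv_bound (D : Submodule ℂ H) (L : D →ₗ[ℂ] H) (R : H →L[ℂ] H) (hR : BInv D L R)
    (c : ℝ) (hc : 0 < c) (h : ∀ x : D, c * ‖(x : H)‖ ≤ ‖L x‖) (y : H) : ‖R y‖ ≤ c⁻¹ * ‖y‖ := by
  obtain ⟨hy, e⟩ := hR.2 y
  have := h ⟨R y, hy⟩
  rw [e] at this
  rw [inv_mul_eq_div, le_div_iff₀ hc]
  simpa [mul_comm] using this

/-- `L - z`. -/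
def shft (D : Submodule ℂ H) (L : D →ₗ[ℂ] H) (z : ℂ) : D →ₗ[ℂ] H := L - z • D.subtype

theorem shft_apply (D : Submodule ℂ H) (L : D →ₗ[ℂ] H) (z : ℂ) (x : D) :
    shft D L z x = L x - z • (x : H) := rfl

theorem binv_line (D : Submodule ℂ H) (L : D →ₗ[ℂ] H) (x c : ℝ) (hc : 0 < c)
    (h : ∀ η : ℝ, ∀ y : D, c * ‖(y : H)‖ ≤ ‖shft D L ⟨x, η⟩ y‖)
    (η₀ : ℝ) (h0 : ∃ R, BInv D (shft D L ⟨x, η₀⟩) R) (η : ℝ) :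
    ∃ R, BInv D (shft D L ⟨x, η⟩) R := by
  let S : Set ℝ := {η | ∃ R, BInv D (shft D L ⟨x, η⟩) R}
  have key : ∀ a ∈ S, ∀ b, |b - a| < c → b ∈ S := by
    rintro a ⟨R, hR⟩ b hab
    have := binv_pert D (shft D L ⟨x, a⟩) (((⟨x, a⟩ : ℂ) - ⟨x, b⟩) • D.subtype) R hR (|b - a| / c)
      (by positivity) (by rwa [div_lt_one hc]) (by
        intro y
        have h3 : ‖(⟨x, a⟩ : ℂ) - ⟨x, b⟩‖ = |b - a| := by
          have : (⟨x, a⟩ : ℂ) - ⟨x, b⟩ = ((a - b : ℝ) : ℂ) * Complex.I := by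
            apply Complex.ext <;> simp
          rw [this, norm_mul, Complex.norm_real, Complex.norm_I, mul_one, Real.norm_eq_abs, abs_sub_comm]
        rw [LinearMap.smul_apply, norm_smul, h3, div_mul_eq_mul_div, le_div_iff₀ hc, mul_assoc]
        gcongr
        have := h a y
        simpa [mul_comm] using this)
    obtain ⟨R', hR'⟩ := this
    refine ⟨R', ?_⟩
    convert hR' using 1
    unfold shft
    module
  have hopen : IsOpen S := by
    rw [Metric.isOpen_iff]
    intro a ha
    exact ⟨c, hc, fun b hb => key a ha b (by simpa [Real.dist_eq] using hb)⟩
  have hclosed : IsClosed S := by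
    rw [← isOpen_compl_iff, Metric.isOpen_iff]
    intro a ha
    refine ⟨c, hc, fun b hb hbS => ha (key b hbS a ?_)⟩
    rw [abs_sub_comm]
    simpa [Real.dist_eq] using hb
  have : S = Set.univ := IsClopen.eq_univ ⟨hclosed, hopen⟩ ⟨η₀, h0⟩
  have h5 : η ∈ S := by rw [this]; trivial
  exact h5

theorem sym_norm (D : Submodule ℂ H) (S : D →ₗ[ℂ] H)
    (hS : ∀ a b : D, inner ℂ (S a) (b : H) = inner ℂ (a : H) (S b)) (z : ℂ) (y : D) :
    ‖shft D S z y‖ ^ 2 = ‖shft D S (z.re : ℂ) y‖ ^ 2 + z.im ^ 2 * ‖(y : H)‖ ^ 2 := by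
  set a := shft D S (z.re : ℂ) y with ha
  have e : shft D S z y = a - (z.im * Complex.I : ℂ) • (y : H) := by
    rw [ha, shft_apply, shft_apply]
    nth_rewrite 1 [← Complex.re_add_im z]
    module
  have hreal : (inner ℂ a (y : H)).im = 0 := by
    have : inner ℂ a (y : H) = inner ℂ (y : H) a := by
      rw [ha, shft_apply, inner_sub_left, inner_sub_right, hS, inner_smul_left, inner_smul_right]
      simp
    have h2 := inner_conj_symm (𝕜 := ℂ) a (y : H)
    rw [← this] at h2
    exact Complex.conj_eq_iff_im.mp h2
  rw [e, @norm_sub_sq ℂ]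
  have : RCLike.re (inner ℂ a ((z.im * Complex.I : ℂ) • (y : H))) = 0 := by
    rw [inner_smul_right]
    simp [hreal]
  rw [this, norm_smul]
  simp [mul_pow]

theorem sym_norm_re (D : Submodule ℂ H) (S : D →ₗ[ℂ] H)
    (hS : ∀ a b : D, inner ℂ (S a) (b : H) = inner ℂ (a : H) (S b)) (z : ℂ) (y : D) :
    ‖shft D S (z.re : ℂ) y‖ ≤ ‖shft D S z y‖ := by
  have := sym_norm D S hS z y
  apply le_of_sq_le_sq _ (norm_nonneg _)
  rw [this]
  nlinarith [mul_nonneg (sq_nonneg z.im) (sq_nonneg ‖(y : H)‖)]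

theorem sym_norm_im (D : Submodule ℂ H) (S : D →ₗ[ℂ] H)
    (hS : ∀ a b : D, inner ℂ (S a) (b : H) = inner ℂ (a : H) (S b)) (z : ℂ) (y : D) :
    |z.im| * ‖(y : H)‖ ≤ ‖shft D S z y‖ := by
  have := sym_norm D S hS z y
  apply le_of_sq_le_sq _ (norm_nonneg _)
  rw [this, mul_pow, sq_abs]
  nlinarith [sq_nonneg ‖shft D S (z.re : ℂ) y‖]


theorem gap_bound_aux (D : Submodule ℂ H) (S : D →ₗ[ℂ] H)
    (hS : ∀ a b : D, inner ℂ (S a) (b : H) = inner ℂ (a : H) (S b))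
    (s ζ : ℝ) (hs : 0 < s) (ev : Finset ℝ) (E : Submodule ℂ H)
    (hE : ∀ ν : ℝ, |ν - ζ| < s → ∀ x : D, S x = (ν : ℂ) • (x : H) → (x : H) ∈ E)
    (hres : ∀ ν : ℝ, |ν - ζ| < s → ν ∉ ev → ∃ R, BInv D (shft D S (ν : ℂ)) R)
    (hζ : ζ ∉ ev) (y : D) (hy : S y ∈ Eᗮ) (hy2 : (y : H) ∈ Eᗮ) :
    s * ‖(y : H)‖ ≤ ‖shft D S (ζ : ℂ) y‖ := by
  obtain ⟨R, hR⟩ := hres ζ (by simpa using hs) hζ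
  have hmem : ∀ y, R y ∈ D := fun y => (hR.2 y).1
  have hL : ∀ y, S ⟨R y, hmem y⟩ - (ζ : ℂ) • (R y) = y := fun y => (hR.2 y).2
  have hL' : ∀ y, S ⟨R y, hmem y⟩ = y + (ζ : ℂ) • (R y) := fun y => by
    rw [← sub_eq_iff_eq_add]; exact hL y
  have hsym : ∀ a b, inner ℂ (R a) b = inner ℂ a (R b) := by
    intro a b
    have h1 := hS ⟨R a, hmem a⟩ ⟨R b, hmem b⟩
    rw [hL', hL'] at h1
    simp only [inner_add_left, inner_add_right, inner_smul_left, inner_smul_right,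
      Complex.conj_ofReal] at h1
    exact (add_right_cancel h1).symm
  have hsa : IsSelfAdjoint R := by
    rw [ContinuousLinearMap.isSelfAdjoint_iff_isSymmetric]
    exact hsym
  -- spectrum outside
  have hfin : {t : ℝ | t ∈ spectrum ℝ R ∧ s⁻¹ < |t|}.Finite := by
    apply Set.Finite.subset ((ev.image (fun ν => (ν - ζ)⁻¹)).finite_toSet)
    rintro t ⟨ht, hst⟩
    have ht0 : t ≠ 0 := by
      rintro rfl
      simp at hst
      linarith
    by_contra hcon
    have hnu : ζ + t⁻¹ ∉ ev := by
      intro h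
      apply hcon
      simp only [Finset.coe_image, Set.mem_image, Finset.mem_coe]
      exact ⟨_, h, by simp⟩
    obtain ⟨R2, hR2⟩ := hres (ζ + t⁻¹) (by
      simp only [add_sub_cancel_left, abs_inv]
      exact inv_lt_of_inv_lt₀ hs hst) hnu
    have hmem2 : ∀ y, R2 y ∈ D := fun y => (hR2.2 y).1
    have hM : ∀ y, S ⟨R2 y, hmem2 y⟩ - ((ζ + t⁻¹ : ℝ) : ℂ) • (R2 y) = y := fun y => (hR2.2 y).2
    have htc : (t : ℂ) ≠ 0 := by exact_mod_cast ht0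
    have id1 : ∀ y, R (R2 y) = (t : ℂ) • (R2 y - R y) := by
      intro y
      have h1 := hR.1 ⟨R2 y, hmem2 y⟩
      have h2 := hM y
      have : shft D S (ζ : ℂ) ⟨R2 y, hmem2 y⟩ = y + (t : ℂ)⁻¹ • R2 y := by
        rw [shft_apply]
        rw [sub_eq_iff_eq_add] at h2
        rw [h2]
        push_cast
        module
      rw [this, map_add, map_smul] at h1
      have h3 : R2 y - R y = (t : ℂ)⁻¹ • R (R2 y) := by
        have h1' : _ = R2 y := h1
        exact (eq_sub_of_add_eq' h1').symm
      rw [h3, smul_smul, mul_inv_cancel₀ htc, one_smul]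
    have id2 : ∀ y, R2 (R y) = (t : ℂ) • (R2 y - R y) := by
      intro y
      have h1 := hR2.1 ⟨R y, hmem y⟩
      have h2 := hL' y
      have : shft D S ((ζ + t⁻¹ : ℝ) : ℂ) ⟨R y, hmem y⟩ = y - (t : ℂ)⁻¹ • R y := by
        rw [shft_apply]
        rw [h2]
        push_cast
        module
      rw [this, map_sub, map_smul] at h1
      have h3 : R2 y - R y = (t : ℂ)⁻¹ • R2 (R y) := by
        have h1' : _ = R y := h1
        rw [sub_eq_iff_eq_add] at h1' ⊢; rw [h1', add_comm]
      rw [h3, smul_smul, mul_inv_cancel₀ htc, one_smul]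
    apply ht
    rw [spectrum.mem_resolventSet_iff, isUnit_iff_exists]
    refine ⟨(t : ℂ)⁻¹ • (1 + (t : ℂ)⁻¹ • R2), ?_, ?_⟩
    · ext y
      have e : (algebraMap ℝ (H →L[ℂ] H) t) = (t : ℂ) • (1 : H →L[ℂ] H) := by
        rw [Algebra.algebraMap_eq_smul_one]; rfl
      rw [e]
      change (t : ℂ) • ((t : ℂ)⁻¹ • (y + (t : ℂ)⁻¹ • R2 y)) -
        R ((t : ℂ)⁻¹ • (y + (t : ℂ)⁻¹ • R2 y)) = y
      simp only [map_add, map_smul, id1]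
      match_scalars <;> field_simp <;> ring_nf
    · ext y
      have e : (algebraMap ℝ (H →L[ℂ] H) t) = (t : ℂ) • (1 : H →L[ℂ] H) := by
        rw [Algebra.algebraMap_eq_smul_one]; rfl
      rw [e]
      change (t : ℂ)⁻¹ • (((t : ℂ) • y - R y) + (t : ℂ)⁻¹ • R2 ((t : ℂ) • y - R y)) = y
      simp only [map_sub, map_smul, id2]
      match_scalars <;> field_simp <;> ring_nf
  set F := hfin.toFinset with hF
  have hFmem : ∀ t, t ∈ F ↔ t ∈ spectrum ℝ R ∧ s⁻¹ < |t| := by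
    intro t; rw [hF]; simp
  -- bump functions
  have hbump : ∀ μ : ℝ, s⁻¹ < |μ| → ∃ χ : ℝ → ℝ, Continuous χ ∧ χ μ = 1 ∧
      ∀ t ∈ spectrum ℝ R, t ≠ μ → χ t = 0 := by
    intro μ hμ
    have hcl : IsClosed ((spectrum ℝ R ∩ {t | |t| ≤ s⁻¹}) ∪ (F.erase μ : Set ℝ)) := by
      apply IsClosed.union
      · apply IsClosed.inter (spectrum.isClosed R)
        exact isClosed_le continuous_abs continuous_const
      · exact (F.erase μ).finite_toSet.isClosed
    have hn : μ ∈ ((spectrum ℝ R ∩ {t | |t| ≤ s⁻¹}) ∪ (F.erase μ : Set ℝ))ᶜ := by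
      simp [hμ]
    obtain ⟨ε, hε, hball⟩ := Metric.isOpen_iff.mp hcl.isOpen_compl μ hn
    refine ⟨fun t => max 0 (1 - |t - μ| / ε), by fun_prop, by simp, ?_⟩
    intro t ht htμ
    have : t ∉ Metric.ball μ ε := by
      intro h
      apply hball h
      by_cases h' : |t| ≤ s⁻¹
      · exact Or.inl ⟨ht, h'⟩
      · right
        push Not at h'
        simp [htμ, hFmem, ht, h']
    simp only [Metric.mem_ball, Real.dist_eq, not_lt] at this
    apply max_eq_left
    have := (one_le_div hε).mpr this
    linarith
  choose! χ hχc hχ1 hχ0 using hbump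
  have hran : ∀ μ : ℝ, s⁻¹ < |μ| → ∀ v, (cfc (χ μ) R) v ∈ E := by
    intro μ hμ v
    have hμ0 : (μ : ℂ) ≠ 0 := by
      intro h
      have : μ = 0 := by exact_mod_cast h
      rw [this] at hμ; simp at hμ; linarith
    have h1 : R * cfc (χ μ) R = μ • cfc (χ μ) R := by
      rw [← cfc_smul μ (χ μ) R ((hχc μ hμ).continuousOn)]
      nth_rewrite 1 [← cfc_id' ℝ R]
      rw [← cfc_mul _ _ R (by fun_prop) ((hχc μ hμ).continuousOn)]
      apply cfc_congr
      intro t ht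
      by_cases h : t = μ
      · simp [h]
      · simp [hχ0 μ hμ t ht h]
    set x := (cfc (χ μ) R) v with hx
    have h2 : R x = (μ : ℂ) • x := congrArg (fun f : H →L[ℂ] H => f v) h1
    have h3 : (μ : ℂ)⁻¹ • R x = x := by rw [h2, smul_smul, inv_mul_cancel₀ hμ0, one_smul]
    have hxD : x ∈ D := by rw [← h3]; exact D.smul_mem _ (hmem x)
    have h4 := hL' x
    have h5 : (⟨R x, hmem x⟩ : D) = (μ : ℂ) • ⟨x, hxD⟩ := Subtype.ext h2
    rw [h5, map_smul] at h4
    have h6 : S ⟨x, hxD⟩ = ((ζ + μ⁻¹ : ℝ) : ℂ) • x := by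
      have : S ⟨x, hxD⟩ = (μ : ℂ)⁻¹ • ((μ : ℂ) • S ⟨x, hxD⟩) := by
        rw [smul_smul, inv_mul_cancel₀ hμ0, one_smul]
      rw [this, h4, h2]
      push_cast
      match_scalars
      field_simp
      ring
    exact hE _ (by
      simp only [add_sub_cancel_left, abs_inv]
      exact inv_lt_of_inv_lt₀ hs hμ) ⟨x, hxD⟩ h6
  have hzero : ∀ μ : ℝ, s⁻¹ < |μ| → ∀ v ∈ Eᗮ, (cfc (χ μ) R) v = 0 := by
    intro μ hμ v hv
    have hsaX : IsSelfAdjoint (cfc (χ μ) R) := cfc_predicate _ _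
    have := (ContinuousLinearMap.isSelfAdjoint_iff_isSymmetric.mp hsaX) v ((cfc (χ μ) R) v)
    rw [← inner_self_eq_zero (𝕜 := ℂ)]
    refine this.trans ?_
    exact Submodule.inner_left_of_mem_orthogonal (hran μ hμ _) hv
  have hcont : ∀ G : Finset ℝ, G ⊆ F → Continuous (fun t => ∑ μ ∈ G, μ * χ μ t) := by
    intro G hG
    refine continuous_finsetSum G (fun μ hμ => ?_)
    exact continuous_const.mul (hχc μ ((hFmem μ).1 (hG hμ)).2)
  have hsum : ∀ v ∈ Eᗮ, (cfc (fun t => ∑ μ ∈ F, μ * χ μ t) R) v = 0 := by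
    intro v hv
    rw [show (fun t => ∑ μ ∈ F, μ * χ μ t) = ∑ μ ∈ F, fun t => μ * χ μ t from by ext; simp]
    rw [cfc_sum (fun μ t => μ * χ μ t) R F (fun μ hμ =>
      (continuous_const.mul (hχc μ ((hFmem μ).1 hμ).2)).continuousOn)]
    rw [_root_.sum_apply]
    apply Finset.sum_eq_zero
    intro μ hμ
    rw [cfc_const_mul μ (χ μ) R (hχc μ ((hFmem μ).1 hμ).2).continuousOn]
    rw [_root_.smul_apply, hzero μ ((hFmem μ).1 hμ).2 v hv, smul_zero]
  have hnorm : ‖cfc (fun t => t - ∑ μ ∈ F, μ * χ μ t) R‖ ≤ s⁻¹ := by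
    apply norm_cfc_le (by positivity)
    intro t ht
    by_cases h : |t| ≤ s⁻¹
    · rw [Finset.sum_eq_zero]
      · simpa using h
      · intro μ hμ
        have h7 := (hFmem μ).1 hμ
        rw [hχ0 μ h7.2 t ht (by rintro rfl; linarith [h7.2]), mul_zero]
    · push Not at h
      have htF : t ∈ F := (hFmem t).2 ⟨ht, h⟩
      rw [Finset.sum_eq_single t]
      · rw [hχ1 t h]; simp; positivity
      · intro μ hμ hne
        rw [hχ0 μ ((hFmem μ).1 hμ).2 t ht (Ne.symm hne), mul_zero]
      · intro h; exact absurd htF h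
  have hRv : ∀ v ∈ Eᗮ, ‖R v‖ ≤ s⁻¹ * ‖v‖ := by
    intro v hv
    have : cfc (fun t => t - ∑ μ ∈ F, μ * χ μ t) R = R - cfc (fun t => ∑ μ ∈ F, μ * χ μ t) R := by
      rw [cfc_sub (fun t => t) (fun t => ∑ μ ∈ F, μ * χ μ t) R (by fun_prop)
        (hcont F subset_rfl).continuousOn, cfc_id' ℝ R]
    have h8 : R v = cfc (fun t => t - ∑ μ ∈ F, μ * χ μ t) R v := by
      rw [this, _root_.sub_apply, hsum v hv, sub_zero]
    rw [h8]
    exact ContinuousLinearMap.le_of_opNorm_le _ hnorm v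
  have hfinal := hRv (shft D S (ζ : ℂ) y) (Submodule.sub_mem _ hy (Submodule.smul_mem _ _ hy2))
  rw [hR.1] at hfinal
  rw [inv_mul_eq_div, le_div_iff₀ hs] at hfinal
  linarith

theorem gap_bound (D : Submodule ℂ H) (S : D →ₗ[ℂ] H)
    (hS : ∀ a b : D, inner ℂ (S a) (b : H) = inner ℂ (a : H) (S b))
    (r s : ℝ) (hs : 0 < s) (ev : Finset ℝ) (E : Submodule ℂ H)
    (hE : ∀ ν : ℝ, |ν - r| < s → ∀ x : D, S x = (ν : ℂ) • (x : H) → (x : H) ∈ E)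
    (hres : ∀ ν : ℝ, |ν - r| < s → ν ∉ ev → ∃ R, BInv D (shft D S (ν : ℂ)) R)
    (y : D) (hy : S y ∈ Eᗮ) (hy2 : (y : H) ∈ Eᗮ) :
    s * ‖(y : H)‖ ≤ ‖shft D S (r : ℂ) y‖ := by
  have key : ∀ ε : ℝ, 0 < ε → ε < s → (s - 2 * ε) * ‖(y : H)‖ ≤ ‖shft D S (r : ℂ) y‖ := by
    intro ε hε hεs
    obtain ⟨ζ, hζ1, hζ2⟩ : ∃ ζ ∈ Set.Ioo r (r + ε), ζ ∉ ev :=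
      (Set.Ioo_infinite (by linarith)).exists_notMem_finset ev
    have h1 : |ζ - r| ≤ ε := by rw [abs_le]; constructor <;> linarith [hζ1.1, hζ1.2]
    have hsub : ∀ ν, |ν - ζ| < s - ε → |ν - r| < s := by
      intro ν hν
      have := abs_sub_le ν ζ r
      linarith
    have := gap_bound_aux D S hS (s - ε) ζ (by linarith) ev E (fun ν hν => hE ν (hsub ν hν))
      (fun ν hν => hres ν (hsub ν hν)) hζ2 y hy hy2
    have h2 : shft D S (ζ : ℂ) y = shft D S (r : ℂ) y - ((ζ - r : ℝ) : ℂ) • (y : H) := by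
      rw [shft_apply, shft_apply]; push_cast; module
    rw [h2] at this
    have h3 := norm_sub_le (shft D S (r : ℂ) y) (((ζ - r : ℝ) : ℂ) • (y : H))
    rw [norm_smul, Complex.norm_real, Real.norm_eq_abs] at h3
    have h4 := mul_le_mul_of_nonneg_right h1 (norm_nonneg (y : H))
    nlinarith
  refine le_of_forall_pos_le_add (fun ε hε => ?_)
  set n := ‖(y : H)‖
  have hn : 0 ≤ n := norm_nonneg _
  have := key (min (ε / (2 * (n + 1))) (s / 2)) (lt_min (by positivity) (by linarith))
    (lt_of_le_of_lt (min_le_right _ _) (by linarith))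
  have h5 : min (ε / (2 * (n + 1))) (s / 2) * (2 * (n + 1)) ≤ ε := by
    rw [← le_div_iff₀ (by positivity)]
    exact min_le_left _ _
  have h6 : 0 ≤ min (ε / (2 * (n + 1))) (s / 2) := le_min (by positivity) (by linarith)
  nlinarith


theorem mobius_sphere (a w : ℂ) (hw : ‖w‖ = 1) :
    ‖1 - (starRingEnd ℂ) a * w‖ = ‖w - a‖ := by
  have h : Complex.normSq (1 - (starRingEnd ℂ) a * w) = Complex.normSq (w - a) := by
    have h1 : Complex.normSq w = 1 := by rw [Complex.normSq_eq_norm_sq, hw]; norm_num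
    simp only [Complex.normSq_apply, Complex.sub_re, Complex.sub_im, Complex.mul_re, Complex.mul_im,
      Complex.conj_re, Complex.conj_im, Complex.one_re, Complex.one_im] at *
    linear_combination (a.re*a.re+a.im*a.im - 1) * h1
  rw [Complex.normSq_eq_norm_sq, Complex.normSq_eq_norm_sq] at h
  exact (sq_eq_sq₀ (norm_nonneg _) (norm_nonneg _)).mp h

theorem mobius_bound (κ₀ : ℝ) (h0 : 0 ≤ κ₀) (h1 : κ₀ < 1) : ∃ κ : ℝ, 0 ≤ κ ∧ κ < 1 ∧
    ∀ a w : ℂ, ‖a‖ ≤ κ₀ → ‖w‖ ≤ κ₀ → ‖w - a‖ ≤ κ * ‖1 - (starRingEnd ℂ) a * w‖ := by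
  have hk : κ₀ ^ 2 < 1 := by nlinarith
  have hk2 : 0 < (1 - κ₀ ^ 2) ^ 2 := by apply pow_pos; linarith
  have hk3 : (1 - κ₀ ^ 2) ^ 2 ≤ 1 := by nlinarith [sq_nonneg κ₀]
  refine ⟨Real.sqrt (1 - (1 - κ₀ ^ 2) ^ 2 / 4), Real.sqrt_nonneg _, ?_, ?_⟩
  · rw [Real.sqrt_lt' one_pos]; linarith
  · intro a w ha hw
    apply le_of_sq_le_sq _ (by positivity)
    rw [mul_pow, Real.sq_sqrt (by linarith)]
    have ha2 : ‖a‖ ^ 2 ≤ κ₀ ^ 2 := by gcongr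
    have hw2 : ‖w‖ ^ 2 ≤ κ₀ ^ 2 := by gcongr
    have id : ‖1 - (starRingEnd ℂ) a * w‖ ^ 2 - ‖w - a‖ ^ 2 = (1 - ‖a‖ ^ 2) * (1 - ‖w‖ ^ 2) := by
      rw [← Complex.normSq_eq_norm_sq, ← Complex.normSq_eq_norm_sq, ← Complex.normSq_eq_norm_sq,
        ← Complex.normSq_eq_norm_sq]
      simp only [Complex.normSq_apply, Complex.sub_re, Complex.sub_im, Complex.mul_re,
        Complex.mul_im, Complex.conj_re, Complex.conj_im, Complex.one_re, Complex.one_im]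
      ring
    have h4 : ‖1 - (starRingEnd ℂ) a * w‖ ≤ 2 := by
      have := norm_sub_le 1 ((starRingEnd ℂ) a * w)
      rw [norm_mul, RCLike.norm_conj, norm_one] at this
      have : ‖a‖ * ‖w‖ ≤ 1 * 1 := by gcongr <;> linarith
      linarith
    have h5 : ‖1 - (starRingEnd ℂ) a * w‖ ^ 2 ≤ 4 := by nlinarith [norm_nonneg (1 - (starRingEnd ℂ) a * w)]
    have h6 : (1 - κ₀ ^ 2) ^ 2 ≤ (1 - ‖a‖ ^ 2) * (1 - ‖w‖ ^ 2) := by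
      rw [pow_two]
      gcongr <;> linarith
    nlinarith

open Asymptotics Filter Topology in
theorem blaschke (R₁ κ₀ κ M : ℝ) (hR : 1 < R₁) (hκ1 : κ₀ < 1) (hκ : 0 ≤ κ)
    (hb : ∀ a w : ℂ, ‖a‖ ≤ κ₀ → ‖w‖ ≤ κ₀ → ‖w - a‖ ≤ κ * ‖1 - (starRingEnd ℂ) a * w‖)
    (w₀ : ℂ) (hw₀ : ‖w₀‖ ≤ κ₀) (S : Finset ℂ) (hS : ∀ a ∈ S, ‖a‖ ≤ κ₀) (N : ℕ) :
    ∀ (g : ℂ → ℂ) (n : ℂ → ℕ), DifferentiableOn ℂ g (Metric.ball 0 R₁) →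
      (∀ w : ℂ, ‖w‖ = 1 → ‖g w‖ ≤ M) →
      (∀ a ∈ S, g =O[𝓝[≠] a] (fun w => (w - a) ^ (n a))) → ∑ a ∈ S, n a = N →
      ‖g w₀‖ ≤ M * κ ^ N := by
  induction N with
  | zero =>
    intro g n hg hM _ _
    rw [pow_zero, mul_one]
    have hd : DiffContOnCl ℂ g (Metric.ball 0 1) := by
      apply DifferentiableOn.diffContOnCl
      rw [closure_ball _ one_ne_zero]
      exact hg.mono (Metric.closedBall_subset_ball hR)
    apply Complex.norm_le_of_forall_mem_frontier_norm_le Metric.isBounded_ball hd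
    · intro w hw
      rw [frontier_ball _ one_ne_zero] at hw
      exact hM w (by simpa using hw)
    · apply subset_closure
      simpa using lt_of_le_of_lt hw₀ hκ1
  | succ N ih =>
    intro g n hg hM hO hsum
    obtain ⟨a, haS, hna⟩ : ∃ a ∈ S, n a ≠ 0 := by
      by_contra hcon
      push Not at hcon
      rw [Finset.sum_eq_zero hcon] at hsum
      omega
    have haκ := hS a haS
    have hab : a ∈ Metric.ball (0 : ℂ) R₁ := by
      simp; linarith
    have hgc : ContinuousAt g a := (hg.differentiableAt (Metric.isOpen_ball.mem_nhds hab)).continuousAt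
    have hga : g a = 0 := by
      have h1 : Tendsto g (𝓝[≠] a) (𝓝 (g a)) := hgc.tendsto.mono_left nhdsWithin_le_nhds
      have h2 : Tendsto g (𝓝[≠] a) (𝓝 0) := by
        apply (hO a haS).trans_tendsto
        have : Tendsto (fun w : ℂ => (w - a) ^ (n a)) (𝓝 a) (𝓝 ((a - a) ^ (n a))) :=
          Continuous.tendsto (by fun_prop) a
        rw [sub_self, zero_pow hna] at this
        exact this.mono_left nhdsWithin_le_nhds
      exact tendsto_nhds_unique h1 h2
    set g₁ : ℂ → ℂ := fun w => dslope g a w * (1 - (starRingEnd ℂ) a * w) with hg₁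
    have hfac : ∀ w, (w - a) * g₁ w = g w * (1 - (starRingEnd ℂ) a * w) := by
      intro w
      have := sub_smul_dslope g a w
      rw [hga, sub_zero, smul_eq_mul] at this
      rw [hg₁, ← this]; ring
    have hg₁d : DifferentiableOn ℂ g₁ (Metric.ball 0 R₁) := by
      apply DifferentiableOn.mul
      · exact (Complex.differentiableOn_dslope (Metric.isOpen_ball.mem_nhds hab)).mpr hg
      · fun_prop
    clear_value g₁
    have hg₁M : ∀ w : ℂ, ‖w‖ = 1 → ‖g₁ w‖ ≤ M := by
      intro w hw
      have h1 := mobius_sphere a w hw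
      have h2 := congrArg norm (hfac w)
      rw [norm_mul, norm_mul, h1] at h2
      have h3 : 0 < ‖w - a‖ := by
        have := norm_sub_norm_le w a
        linarith
      have h4 : ‖g₁ w‖ = ‖g w‖ := by
        apply mul_left_cancel₀ h3.ne'
        linarith
      rw [h4]; exact hM w hw
    have hO1 : ∀ c ∈ S, g₁ =O[𝓝[≠] c] (fun w => (w - c) ^ (Function.update n a (n a - 1) c)) := by
      intro c hc
      have hOc := hO c hc
      have hbd : (fun w : ℂ => (1 - (starRingEnd ℂ) a * w)) =O[𝓝[≠] c] (fun _ => (1 : ℂ)) := by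
        have : Tendsto (fun w : ℂ => (1 - (starRingEnd ℂ) a * w)) (𝓝[≠] c) (𝓝 (1 - (starRingEnd ℂ) a * c)) :=
          (Continuous.tendsto (by fun_prop) c).mono_left nhdsWithin_le_nhds
        exact this.isBigO_one ℂ
      by_cases hca : c = a
      · subst hca
        rw [Function.update_self]
        have h1 : g₁ =ᶠ[𝓝[≠] c] fun w => (g w * (w - c)⁻¹) * (1 - (starRingEnd ℂ) c * w) := by
          filter_upwards [self_mem_nhdsWithin] with w hw
          have hw' : w - c ≠ 0 := sub_ne_zero.mpr hw
          have := hfac w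
          field_simp
          linear_combination this
        have h2 : (fun w => (w - c) ^ (n c) * (w - c)⁻¹ * 1) =ᶠ[𝓝[≠] c] fun w => (w - c) ^ (n c - 1) := by
          filter_upwards [self_mem_nhdsWithin] with w hw
          have hw' : w - c ≠ 0 := sub_ne_zero.mpr hw
          rw [mul_one, ← pow_sub_one_mul hna, mul_assoc, mul_inv_cancel₀ hw', mul_one]
        refine IsBigO.congr' ?_ h1.symm h2
        exact (hOc.mul (isBigO_refl _ _)).mul hbd
      · rw [Function.update_of_ne hca]
        have hinv : (fun w : ℂ => (w - a)⁻¹) =O[𝓝[≠] c] (fun _ => (1 : ℂ)) := by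
          have : Tendsto (fun w : ℂ => (w - a)⁻¹) (𝓝 c) (𝓝 ((c - a)⁻¹)) := by
            apply Tendsto.inv₀ (Continuous.tendsto (by fun_prop) c)
            exact sub_ne_zero.mpr hca
          exact (this.mono_left nhdsWithin_le_nhds).isBigO_one ℂ
        have h1 : g₁ =ᶠ[𝓝[≠] c] fun w => (g w * (w - a)⁻¹) * (1 - (starRingEnd ℂ) a * w) := by
          have : ∀ᶠ w in 𝓝[≠] c, w ≠ a := 
            nhdsWithin_le_nhds (isOpen_ne.mem_nhds hca)
          filter_upwards [this] with w hw
          have hw' : w - a ≠ 0 := sub_ne_zero.mpr hw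
          have := hfac w
          field_simp
          linear_combination this
        refine IsBigO.congr' ((hOc.mul hinv).mul hbd) h1.symm ?_
        filter_upwards with w
        ring
    have hsum1 : ∑ c ∈ S, Function.update n a (n a - 1) c = N := by
      rw [Finset.sum_update_of_mem haS]
      rw [← Finset.add_sum_erase S n haS, Finset.erase_eq] at hsum
      omega
    have := ih g₁ _ hg₁d hg₁M hO1 hsum1
    have hf := congrArg norm (hfac w₀)
    rw [norm_mul, norm_mul] at hf
    have hpos : 0 < ‖1 - (starRingEnd ℂ) a * w₀‖ := by
      have h1 := norm_sub_norm_le 1 ((starRingEnd ℂ) a * w₀)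
      rw [norm_mul, RCLike.norm_conj, norm_one] at h1
      have : ‖a‖ * ‖w₀‖ ≤ 1 * ‖w₀‖ := by gcongr; linarith
      linarith
    have hbb := hb a w₀ haκ hw₀
    have : ‖g w₀‖ * ‖1 - (starRingEnd ℂ) a * w₀‖ ≤ (M * κ ^ (N + 1)) * ‖1 - (starRingEnd ℂ) a * w₀‖ := by
      rw [← hf]
      calc ‖w₀ - a‖ * ‖g₁ w₀‖ ≤ (κ * ‖1 - (starRingEnd ℂ) a * w₀‖) * (M * κ ^ N) := by gcongr
        _ = _ := by ring
    exact le_of_mul_le_mul_right this hpos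

theorem conf_map (δ δ' d : ℝ) (hδ : 0 < δ) (hδ' : δ < δ') (hd : 0 < d) :
    ∃ (R₁ κ₀ : ℝ) (ψ : ℂ → ℂ), 1 < R₁ ∧ 0 ≤ κ₀ ∧ κ₀ < 1 ∧
      DifferentiableOn ℂ ψ (Metric.ball 0 R₁) ∧
      (∀ w ∈ Metric.ball (0 : ℂ) R₁, |(ψ w).re| < δ') ∧
      ∀ ω : ℂ, |ω.re| ≤ δ → |ω.im| ≤ d → ∃ w : ℂ, ‖w‖ ≤ κ₀ ∧ ψ w = ω := by
  have hpi := Real.pi_pos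
  have hδ'0 : 0 < δ' := hδ.trans hδ'
  set c : ℝ := Real.pi / (2 * δ') with hc
  have hc0 : 0 < c := by positivity
  have hcδ : c * δ' = Real.pi / 2 := by rw [hc]; field_simp
  -- the map to the disc
  set U : ℂ → ℂ := fun ω => Complex.exp (Complex.I * c * ω) with hU
  set φ : ℂ → ℂ := fun ω => (U ω - 1) / (U ω + 1) with hφ
  set Q : Set ℂ := Set.Icc (-δ) δ ×ℂ Set.Icc (-d) d with hQ
  have hQc : IsCompact Q := isCompact_Icc.reProdIm isCompact_Icc
  have hQmem : ∀ ω : ℂ, ω ∈ Q ↔ |ω.re| ≤ δ ∧ |ω.im| ≤ d := by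
    intro ω; rw [hQ, Complex.mem_reProdIm, Set.mem_Icc, Set.mem_Icc, abs_le, abs_le]
  have hexpim : ∀ ω : ℂ, (Complex.I * c * ω).im = c * ω.re := by intro ω; simp
  have himlt : ∀ ω ∈ Q, |c * ω.re| < Real.pi / 2 := by
    intro ω hω
    have := ((hQmem ω).1 hω).1
    rw [abs_mul, abs_of_pos hc0, ← hcδ]
    have : |ω.re| < δ' := by linarith
    gcongr
  have hUre : ∀ ω ∈ Q, 0 < (U ω).re := by
    intro ω hω
    rw [hU]
    simp only [Complex.exp_re, hexpim]
    have := abs_lt.mp (himlt ω hω)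
    exact mul_pos (Real.exp_pos _) (Real.cos_pos_of_mem_Ioo ⟨this.1, this.2⟩)
  have hU1 : ∀ ω ∈ Q, U ω + 1 ≠ 0 := by
    intro ω hω h
    have h1 := congrArg Complex.re h
    simp at h1
    linarith [hUre ω hω]
  have hφlt : ∀ ω ∈ Q, ‖φ ω‖ < 1 := by
    intro ω hω
    rw [hφ]
    simp only [norm_div]
    rw [div_lt_one (norm_pos_iff.mpr (hU1 ω hω))]
    apply lt_of_pow_lt_pow_left₀ 2 (norm_nonneg _)
    rw [← Complex.normSq_eq_norm_sq, ← Complex.normSq_eq_norm_sq]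
    have := hUre ω hω
    simp only [Complex.normSq_apply, Complex.sub_re, Complex.sub_im, Complex.add_re, Complex.add_im,
      Complex.one_re, Complex.one_im]
    nlinarith
  have hφc : ContinuousOn φ Q := by
    apply ContinuousOn.div
    · fun_prop
    · fun_prop
    · exact hU1
  obtain ⟨ω₀, hω₀, hmax⟩ := hQc.exists_isMaxOn (f := fun ω => ‖φ ω‖)
    ⟨0, (hQmem 0).2 (by simp; constructor <;> linarith)⟩ hφc.norm
  set ρ := ‖φ ω₀‖ with hρ
  have hρ1 : ρ < 1 := hφlt ω₀ hω₀
  have hρ0 : 0 ≤ ρ := norm_nonneg _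
  set t : ℝ := (1 + ρ) / 2 with ht
  have ht0 : 0 < t := by linarith
  have ht1 : t < 1 := by linarith
  have htρ : ρ < t := by linarith
  have hre : ∀ v : ℂ, ‖v‖ < 1 → 0 < ((1 + v) / (1 - v)).re := by
    intro v hv
    have hv2 : Complex.normSq v < 1 := by
      rw [Complex.normSq_eq_norm_sq]; nlinarith [norm_nonneg v]
    have h1 : (1 - v) ≠ 0 := by
      intro h
      have : v = 1 := (sub_eq_zero.mp h).symm
      rw [this] at hv; simp at hv
    have h2 : 0 < Complex.normSq (1 - v) := Complex.normSq_pos.mpr h1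
    rw [Complex.div_re, ← add_div]
    apply div_pos _ h2
    simp [Complex.normSq_apply] at *
    nlinarith
  have htw : ∀ w ∈ Metric.ball (0 : ℂ) t⁻¹, ‖(t : ℂ) * w‖ < 1 := by
    intro w hw
    rw [norm_mul, Complex.norm_real, Real.norm_eq_abs, abs_of_pos ht0]
    have : ‖w‖ < t⁻¹ := by simpa using hw
    calc t * ‖w‖ < t * t⁻¹ := by gcongr
      _ = 1 := mul_inv_cancel₀ ht0.ne'
  refine ⟨t⁻¹, ρ / t, fun w => -Complex.I * (c : ℂ)⁻¹ * Complex.log ((1 + t * w) / (1 - t * w)),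
    (one_lt_inv₀ ht0).mpr ht1, by positivity, by rwa [div_lt_one ht0], ?_, ?_, ?_⟩
  · apply DifferentiableOn.const_mul
    intro w hw
    have h1 := hre _ (htw w hw)
    apply DifferentiableAt.differentiableWithinAt
    apply DifferentiableAt.clog
    · apply DifferentiableAt.div (by fun_prop) (by fun_prop)
      intro h
      rw [h] at h1; simp at h1
    · left; exact h1
  · intro w hw
    have h1 := hre _ (htw w hw)
    have h2 := Complex.abs_arg_lt_pi_div_two_iff.mpr (Or.inl h1)
    have : (-Complex.I * (c : ℂ)⁻¹ * Complex.log ((1 + t * w) / (1 - t * w))).re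
        = c⁻¹ * Complex.arg ((1 + t * w) / (1 - t * w)) := by
      rw [← Complex.ofReal_inv, ← Complex.log_im]
      simp
    rw [this, abs_mul, abs_of_pos (inv_pos.mpr hc0), inv_mul_lt_iff₀ hc0, hcδ]
    exact h2
  · intro ω h1 h2
    have hω : ω ∈ Q := (hQmem ω).2 ⟨h1, h2⟩
    have htc : (t : ℂ) ≠ 0 := by exact_mod_cast ht0.ne'
    have hcc : (c : ℂ) ≠ 0 := by exact_mod_cast hc0.ne'
    refine ⟨φ ω / t, ?_, ?_⟩
    · rw [norm_div, Complex.norm_real, Real.norm_eq_abs, abs_of_pos ht0]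
      gcongr
      exact hmax hω
    · have h3 : (t : ℂ) * (φ ω / t) = φ ω := by field_simp
      simp only [h3]
      have h4 : (1 + φ ω) / (1 - φ ω) = U ω := by
        have := hU1 ω hω
        have e1 : 1 + φ ω = 2 * U ω / (U ω + 1) := by rw [hφ]; field_simp; ring
        have e2 : 1 - φ ω = 2 / (U ω + 1) := by rw [hφ]; field_simp; ring
        rw [e1, e2]; field_simp
      rw [h4, hU]
      have h5 := abs_lt.mp (himlt ω hω)
      rw [Complex.log_exp (by rw [hexpim]; linarith) (by rw [hexpim]; linarith)]
      field_simp
      simp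


open Filter Topology in
theorem lemX (p b M d c : ℝ) (hp : 0 ≤ p) (hp1 : p < 1) (hb : 0 < b) (hbd : b < d)
    (hM : 0 ≤ M) (hM0 : p = 0 → M = 0) (hc : 0 ≤ c) :
    ∃ R q : ℝ, 1 ≤ R ∧ 0 ≤ q ∧ q < 1 ∧ ∀ r t y u β : ℝ, R ≤ |r| → 0 ≤ y → 0 ≤ u → 0 ≤ t →
      d * |r| ^ p * y ≤ u → t ≤ u + (|r| + c * |r| ^ p) * y →
      β ≤ b * t ^ p * y ^ (1 - p) + M * y → β ≤ q * u := by
  have hd : 0 < d := hb.trans hbd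
  rcases hp.eq_or_lt with hp0 | hp0
  · refine ⟨1, b / d, le_refl _, by positivity, (div_lt_one hd).mpr hbd, ?_⟩
    intro r t y u β hr hy hu ht h1 h2 h3
    rw [← hp0] at h3 h1
    rw [hM0 hp0.symm] at h3
    simp at h3 h1
    calc β ≤ b * y := h3
      _ = b / d * (d * y) := by field_simp
      _ ≤ _ := by gcongr
  · set Q : ℝ → ℝ := fun ρ => b * (d * ρ) ^ (-(1 - p)) + b / d + b * c ^ p * ρ ^ (-(1 - p)) / d + M / (d * ρ)
      with hQ
    have hlim : Tendsto Q atTop (𝓝 (b * 0 + b / d + b * c ^ p * 0 / d + 0)) := by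
      have hdt : Tendsto (fun ρ : ℝ => d * ρ) atTop atTop := tendsto_id.const_mul_atTop hd
      have h1 := tendsto_rpow_neg_atTop (y := 1 - p) (by linarith)
      refine Tendsto.add (Tendsto.add (Tendsto.add ?_ tendsto_const_nhds) ?_) ?_
      · exact (h1.comp hdt).const_mul b
      · exact (h1.const_mul _).div_const _
      · exact hdt.const_div_atTop M
    have hlim2 := hlim.comp (tendsto_rpow_atTop hp0)
    have hlt : b * 0 + b / d + b * c ^ p * 0 / d + 0 < (1 + b / d) / 2 := by
      have := (div_lt_one hd).mpr hbd
      simp; linarith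
    obtain ⟨R, hR⟩ := eventually_atTop.mp (hlim2.eventually_lt_const hlt)
    have := (div_lt_one hd).mpr hbd
    refine ⟨max R 1, (1 + b / d) / 2, le_max_right _ _, by positivity, by linarith, ?_⟩
    intro r t y u β hr hy hu ht h1 h2 h3
    have hr1 : 1 ≤ |r| := (le_max_right _ _).trans hr
    have hQr := hR |r| ((le_max_left _ _).trans hr)
    set ρ := |r| ^ p with hρ
    have hρ0 : 0 < ρ := by positivity
    change Q ρ < _ at hQr
    have hdρ : 0 < d * ρ := by positivity
    rcases hy.eq_or_lt with hy0 | hy0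
    · rw [← hy0, Real.zero_rpow (by linarith)] at h3
      simp at h3
      exact h3.trans (by positivity)
    have hyu : y ≤ u / (d * ρ) := by rw [le_div_iff₀ hdρ]; linarith
    have hu0 : 0 < u := lt_of_lt_of_le (by positivity) h1
    have e1 : t ^ p ≤ u ^ p + (ρ * y ^ p + c ^ p * ρ ^ p * y ^ p) := by
      calc t ^ p ≤ (u + (|r| * y + c * ρ * y)) ^ p := by
            gcongr; linarith
        _ ≤ u ^ p + (|r| * y + c * ρ * y) ^ p := Real.rpow_add_le_add_rpow (by positivity) (by positivity) hp hp1.le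
        _ ≤ u ^ p + ((|r| * y) ^ p + (c * ρ * y) ^ p) := by
            gcongr; exact Real.rpow_add_le_add_rpow (by positivity) (by positivity) hp hp1.le
        _ = _ := by
            rw [Real.mul_rpow (by positivity) hy, Real.mul_rpow (by positivity) hy,
              Real.mul_rpow hc (by positivity)]
    have e2 : y ^ p * y ^ (1 - p) = y := by
      rw [← Real.rpow_add hy0]; simp
    have e3 : u ^ p * y ^ (1 - p) ≤ (d * ρ) ^ (-(1 - p)) * u := by
      calc u ^ p * y ^ (1 - p) ≤ u ^ p * (u / (d * ρ)) ^ (1 - p) := by gcongr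
        _ = (u ^ p * u ^ (1 - p)) * (d * ρ) ^ (-(1 - p)) := by
            rw [Real.div_rpow hu hdρ.le, Real.rpow_neg hdρ.le]; ring
        _ = _ := by rw [← Real.rpow_add hu0]; simp [mul_comm]
    have e4 : ρ ^ p = ρ ^ (-(1 - p)) * ρ := by
      nth_rewrite 3 [← Real.rpow_one ρ]
      rw [← Real.rpow_add hρ0]; congr 1; ring
    have e5 : ρ * y ≤ u / d := by rw [le_div_iff₀ hd]; linarith
    calc β ≤ b * t ^ p * y ^ (1 - p) + M * y := h3
      _ ≤ b * (u ^ p + (ρ * y ^ p + c ^ p * ρ ^ p * y ^ p)) * y ^ (1 - p) + M * y := by gcongr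
      _ = b * (u ^ p * y ^ (1 - p)) + b * (ρ * (y ^ p * y ^ (1 - p)))
          + b * c ^ p * ρ ^ p * (y ^ p * y ^ (1 - p)) + M * y := by ring
      _ = b * (u ^ p * y ^ (1 - p)) + b * (ρ * y) + b * c ^ p * ρ ^ (-(1 - p)) * (ρ * y) + M * y := by
          rw [e2, e4]; ring
      _ ≤ b * ((d * ρ) ^ (-(1 - p)) * u) + b * (u / d) + b * c ^ p * ρ ^ (-(1 - p)) * (u / d)
          + M * (u / (d * ρ)) := by gcongr
      _ = Q ρ * u := by rw [hQ]; ring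
      _ ≤ _ := by gcongr

open Filter Topology in
theorem seq_lim (p b₁ : ℝ) (hp : 0 ≤ p) (hp1 : p < 1) (hb : 0 < b₁) (x : ℕ → ℝ)
    (hm : StrictMono x) (h : ∀ n, b₁ * (|x n| ^ p + |x (n + 1)| ^ p) ≤ x (n + 1) - x n) :
    Tendsto x atTop atTop := by
  rcases tendsto_atTop_of_monotone hm.monotone with h1 | ⟨L, hL⟩
  · exact h1
  exfalso
  have hL1 : Tendsto (fun n => x (n + 1)) atTop (𝓝 L) := (tendsto_add_atTop_iff_nat 1).mpr hL
  have hd : Tendsto (fun n => x (n + 1) - x n) atTop (𝓝 0) := by simpa using hL1.sub hL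
  have hab : Tendsto (fun n => b₁ * (|x n| ^ p)) atTop (𝓝 (b₁ * |L| ^ p)) ∨ (p = 0) := by
    rcases hp.eq_or_lt with h0 | h0
    · right; exact h0.symm
    · left; exact (hL.abs.rpow_const (Or.inr h0.le)).const_mul _
  have hle : ∀ n, b₁ * |x n| ^ p ≤ x (n + 1) - x n := fun n => by
    refine le_trans ?_ (h n)
    gcongr
    have : 0 ≤ |x (n + 1)| ^ p := by positivity
    linarith
  by_cases hp0 : p = 0
  · have : ∀ n, b₁ ≤ x (n + 1) - x n := fun n => by simpa [hp0] using hle n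
    have := ge_of_tendsto' hd this
    linarith
  have h2 := hab.resolve_right hp0
  have h3 : b₁ * |L| ^ p ≤ 0 := le_of_tendsto_of_tendsto' h2 hd hle
  have h4 : L = 0 := by
    by_contra hne
    have : 0 < |L| := abs_pos.mpr hne
    have : 0 < b₁ * |L| ^ p := by positivity
    linarith
  subst h4
  have hneg : ∀ n, x n < 0 := fun n =>
    lt_of_lt_of_le (hm (Nat.lt_succ_self n)) (hm.monotone.ge_of_tendsto hL (n + 1))
  have hb2 : ∀ n, b₁ ≤ |x n| ^ (1 - p) := by
    intro n
    have h5 := hle n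
    have h6 : b₁ * |x n| ^ p ≤ |x n| := by
      rw [abs_of_neg (hneg n)] at *
      linarith [hneg (n + 1)]
    have h7 : 0 < |x n| := abs_pos.mpr (hneg n).ne
    rw [Real.rpow_sub h7, Real.rpow_one, le_div_iff₀ (by positivity)]
    exact h6
  have h8 : Tendsto (fun n => |x n| ^ (1 - p)) atTop (𝓝 (|0| ^ (1 - p))) :=
    hL.abs.rpow_const (Or.inr (by linarith))
  have := ge_of_tendsto' h8 hb2
  rw [abs_zero, Real.zero_rpow (by linarith)] at this
  linarith

open Filter Topology in
theorem r_lim (p b₁ : ℝ) (hp : 0 ≤ p) (hp1 : p < 1) (hb : 0 < b₁) (x : ℤ → ℝ)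
    (hm : StrictMono x) (h : ∀ n, b₁ * (|x n| ^ p + |x (n + 1)| ^ p) ≤ x (n + 1) - x n) (R : ℝ) :
    ∃ N : ℕ, ∀ k : ℤ, (N : ℤ) ≤ |k| → R ≤ |x k| := by
  have h1 := seq_lim p b₁ hp hp1 hb (fun n : ℕ => x n) (fun a b hab => hm (by exact_mod_cast hab))
    (fun n => by have := h n; push_cast; exact this)
  have h2 := seq_lim p b₁ hp hp1 hb (fun n : ℕ => - x (-n))
    (fun a b hab => neg_lt_neg (hm (by omega)))
    (fun n => by
      have := h (-(n : ℤ) - 1)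
      rw [sub_add_cancel] at this
      have e : (-(((n + 1 : ℕ) : ℤ))) = -(n : ℤ) - 1 := by push_cast; ring
      simp only [e, abs_neg]
      linarith)
  obtain ⟨N1, hN1⟩ := eventually_atTop.mp (tendsto_atTop.mp h1 R)
  obtain ⟨N2, hN2⟩ := eventually_atTop.mp (tendsto_atTop.mp h2 R)
  refine ⟨max N1 N2, fun k hk => ?_⟩
  rcases le_or_gt 0 k with hk0 | hk0
  · obtain ⟨n, rfl⟩ := Int.eq_ofNat_of_zero_le hk0
    rw [abs_of_nonneg hk0] at hk
    exact (hN1 n (by omega)).trans (le_abs_self _)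
  · obtain ⟨n, hn⟩ := Int.eq_ofNat_of_zero_le (a := -k) (by omega)
    rw [abs_of_neg hk0] at hk
    have hk' : k = -(n : ℤ) := by omega
    rw [hk']
    exact (hN2 n (by omega)).trans (neg_le_abs _)


section fredholm
variable {ι : Type*} [Fintype ι] [DecidableEq ι]

/-- coordinates -/
def cf (e : ι → H) : H →ₗ[ℂ] (ι → ℂ) := LinearMap.pi (fun i => (innerSL ℂ (e i) : H →ₗ[ℂ] ℂ))

/-- embedding -/
def emb (e : ι → H) : (ι → ℂ) →ₗ[ℂ] H := Fintype.linearCombination ℂ e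

/-- the finite section matrix -/
def Fm (e : ι → H) (σ : ℂ) (G : H →L[ℂ] H) : Matrix ι ι ℂ :=
  1 - σ • Matrix.of (fun i j => inner ℂ (e i) (G (e j)))

theorem cf_apply (e : ι → H) (y : H) (i : ι) : cf e y i = inner ℂ (e i) y := rfl

theorem emb_apply (e : ι → H) (v : ι → ℂ) : emb e v = ∑ i, v i • e i := rfl

theorem cf_emb (e : ι → H) (he : Orthonormal ℂ e) (v : ι → ℂ) : cf e (emb e v) = v := by
  ext i
  rw [cf_apply, emb_apply, he.inner_right_fintype]

theorem Fm_mulVec (e : ι → H) (σ : ℂ) (G : H →L[ℂ] H) (v : ι → ℂ) :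
    (Fm e σ G).mulVec v = v - σ • cf e (G (emb e v)) := by
  rw [Fm, Matrix.sub_mulVec, Matrix.one_mulVec, Matrix.smul_mulVec]
  congr 2
  ext i
  simp only [Matrix.mulVec, dotProduct, Matrix.of_apply, cf_apply, emb_apply, map_sum, map_smul,
    inner_sum, inner_smul_right]
  exact Finset.sum_congr rfl (fun j _ => mul_comm _ _)

/-- `1 - σ P G` -/
def Phi (e : ι → H) (σ : ℂ) (G : H →L[ℂ] H) : H →ₗ[ℂ] H :=
  LinearMap.id - σ • (emb e ∘ₗ cf e ∘ₗ (G : H →ₗ[ℂ] H))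

theorem Phi_apply (e : ι → H) (σ : ℂ) (G : H →L[ℂ] H) (y : H) :
    Phi e σ G y = y - σ • emb e (cf e (G y)) := rfl

/-- adjugate of `Phi` -/
def Adj (e : ι → H) (σ : ℂ) (G : H →L[ℂ] H) : H →ₗ[ℂ] H :=
  (Fm e σ G).det • LinearMap.id +
    σ • (emb e ∘ₗ (Fm e σ G).adjugate.mulVecLin ∘ₗ cf e ∘ₗ (G : H →ₗ[ℂ] H))

theorem Adj_apply (e : ι → H) (σ : ℂ) (G : H →L[ℂ] H) (y : H) :
    Adj e σ G y = (Fm e σ G).det • y + σ • emb e ((Fm e σ G).adjugate.mulVec (cf e (G y))) := rfl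

theorem Phi_emb (e : ι → H) (σ : ℂ) (G : H →L[ℂ] H) (v : ι → ℂ) :
    Phi e σ G (emb e v) = emb e ((Fm e σ G).mulVec v) := by
  rw [Phi_apply, Fm_mulVec, map_sub, map_smul]

theorem Phi_Adj (e : ι → H) (he : Orthonormal ℂ e) (σ : ℂ) (G : H →L[ℂ] H) (y : H) :
    Phi e σ G (Adj e σ G y) = (Fm e σ G).det • y := by
  have key : (Fm e σ G).mulVec ((Fm e σ G).adjugate.mulVec (cf e (G y)))
      = (Fm e σ G).det • cf e (G y) := by
    rw [Matrix.mulVec_mulVec, Matrix.mul_adjugate, Matrix.smul_mulVec, Matrix.one_mulVec]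
  rw [Adj_apply, map_add, map_smul, map_smul, Phi_emb, key, Phi_apply, map_smul]
  module

theorem Adj_Phi (e : ι → H) (he : Orthonormal ℂ e) (σ : ℂ) (G : H →L[ℂ] H) (y : H) :
    Adj e σ G (Phi e σ G y) = (Fm e σ G).det • y := by
  have key : cf e (G (Phi e σ G y)) = (Fm e σ G).mulVec (cf e (G y)) := by
    rw [Fm_mulVec, Phi_apply, map_sub, map_sub, map_smul, map_smul]
  rw [Adj_apply, key, Matrix.mulVec_mulVec, Matrix.adjugate_mul, Matrix.smul_mulVec,
    Matrix.one_mulVec, Phi_apply, map_smul]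
  module

theorem det_bd (A : Matrix ι ι ℂ) (x : ℝ) (h : ∀ i j, ‖A i j‖ ≤ x) :
    ‖A.det‖ ≤ (Fintype.card ι).factorial * x ^ Fintype.card ι := by
  have := Matrix.det_le (A := A) (abv := NormedField.toAbsoluteValue ℂ) (x := x) h
  rw [nsmul_eq_mul] at this
  exact this

theorem Fm_bd (e : ι → H) (he : Orthonormal ℂ e) (σ : ℂ) (G : H →L[ℂ] H) (c : ℝ)
    (hG : ∀ y, ‖G y‖ ≤ c * ‖y‖) (i j : ι) : ‖Fm e σ G i j‖ ≤ 1 + ‖σ‖ * c := by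
  have h1 : ‖inner ℂ (e i) (G (e j))‖ ≤ c := by
    calc _ ≤ ‖e i‖ * ‖G (e j)‖ := norm_inner_le_norm _ _
      _ ≤ 1 * (c * 1) := by
        have := hG (e j)
        rw [he.1 j] at this
        rw [he.1 i]; gcongr
      _ = c := by ring
  have h2 : ‖(1 : Matrix ι ι ℂ) i j‖ ≤ 1 := by
    rw [Matrix.one_apply]; split_ifs <;> simp
  rw [Fm, Matrix.sub_apply, Matrix.smul_apply, Matrix.of_apply]
  refine (norm_sub_le _ _).trans ?_
  rw [norm_smul]
  gcongr

theorem adj_bd (A : Matrix ι ι ℂ) (x : ℝ) (hx : 1 ≤ x) (h : ∀ i j, ‖A i j‖ ≤ x) (i j : ι) :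
    ‖A.adjugate i j‖ ≤ (Fintype.card ι).factorial * x ^ Fintype.card ι := by
  rw [Matrix.adjugate_apply]
  apply det_bd
  intro k l
  rw [Matrix.updateRow_apply]
  split_ifs
  · rw [Pi.single_apply]
    split_ifs
    · simpa using hx
    · simp; linarith
  · exact h k l

theorem Adj_bd (e : ι → H) (he : Orthonormal ℂ e) (σ : ℂ) (G : H →L[ℂ] H) (c : ℝ) (hc : 0 ≤ c)
    (hG : ∀ y, ‖G y‖ ≤ c * ‖y‖) (y : H) : ‖Adj e σ G y‖ ≤
      (((Fintype.card ι).factorial * (1 + ‖σ‖ * c) ^ Fintype.card ι) *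
        (1 + ‖σ‖ * (Fintype.card ι * (Fintype.card ι * c)))) * ‖y‖ := by
  set Mf : ℝ := (Fintype.card ι).factorial * (1 + ‖σ‖ * c) ^ Fintype.card ι with hMf
  have hMf0 : 0 ≤ Mf := by positivity
  have h1 : (1 : ℝ) ≤ 1 + ‖σ‖ * c := by have : 0 ≤ ‖σ‖ * c := by positivity
                                        linarith
  have hdet := det_bd _ _ (Fm_bd e he σ G c hG)
  have hadj := adj_bd _ _ h1 (Fm_bd e he σ G c hG)
  have hcf : ∀ i, ‖cf e (G y) i‖ ≤ c * ‖y‖ := by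
    intro i
    rw [cf_apply]
    refine (norm_inner_le_norm _ _).trans ?_
    rw [he.1 i, one_mul]; exact hG y
  have hv : ∀ i, ‖(Fm e σ G).adjugate.mulVec (cf e (G y)) i‖ ≤ Fintype.card ι * (Mf * (c * ‖y‖)) := by
    intro i
    refine (norm_sum_le _ _).trans ?_
    refine (Finset.sum_le_card_nsmul _ _ (Mf * (c * ‖y‖)) ?_).trans ?_
    · intro j _
      rw [norm_mul]
      gcongr
      · exact hadj i j
      · exact hcf j
    · simp
  have hemb : ‖emb e ((Fm e σ G).adjugate.mulVec (cf e (G y)))‖ ≤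
      Fintype.card ι * (Fintype.card ι * (Mf * (c * ‖y‖))) := by
    rw [emb_apply]
    refine (norm_sum_le _ _).trans ?_
    refine (Finset.sum_le_card_nsmul _ _ (Fintype.card ι * (Mf * (c * ‖y‖))) ?_).trans ?_
    · intro j _
      rw [norm_smul, he.1 j, mul_one]
      exact hv j
    · simp
  rw [Adj_apply]
  refine (norm_add_le _ _).trans ?_
  rw [norm_smul, norm_smul]
  calc _ ≤ Mf * ‖y‖ + ‖σ‖ * (Fintype.card ι * (Fintype.card ι * (Mf * (c * ‖y‖)))) := by gcongr
    _ = _ := by ring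

open Asymptotics Filter Topology in
theorem entry_diff (Ω : Set ℂ) (hΩ : IsOpen Ω) (D : Submodule ℂ H) (L : D →ₗ[ℂ] H)
    (G : ℂ → H →L[ℂ] H) (hG : ∀ z ∈ Ω, BInv D (shft D L z) (G z)) (c : ℝ) (hc : 0 ≤ c)
    (hb : ∀ z ∈ Ω, ∀ y, ‖G z y‖ ≤ c * ‖y‖) (u v : H) :
    DifferentiableOn ℂ (fun z => inner ℂ u (G z v)) Ω := by
  intro z₀ hz₀
  have hres : ∀ z ∈ Ω, ∀ y, G z y - G z₀ y = (z - z₀) • G z (G z₀ y) := by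
    intro z hz y
    obtain ⟨hy, e⟩ := (hG z₀ hz₀).2 y
    have e2 := (hG z hz).1 ⟨G z₀ y, hy⟩
    rw [shft_apply] at e e2
    have e3 : L ⟨G z₀ y, hy⟩ = y + z₀ • G z₀ y := by rw [← sub_eq_iff_eq_add]; exact e
    rw [e3, map_sub, map_add, map_smul, map_smul] at e2
    simp only at e2
    generalize G z (G z₀ y) = a at e2 ⊢
    rw [← e2]
    module
  have h1 : HasFDerivAt (fun z => inner ℂ u (G z v) -
      (inner ℂ u (G z₀ v) + (z - z₀) * inner ℂ u (G z₀ (G z₀ v))))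
      (0 : ℂ →L[ℂ] ℂ) z₀ := by
    apply Asymptotics.IsBigO.hasFDerivAt (n := 2) _ one_lt_two
    apply IsBigO.of_bound (‖u‖ * (c * (c * (c * ‖v‖))))
    filter_upwards [hΩ.mem_nhds hz₀] with z hz
    have e1 : inner ℂ u (G z v) -
        (inner ℂ u (G z₀ v) + (z - z₀) * inner ℂ u (G z₀ (G z₀ v))) = (z - z₀) ^ 2 * inner ℂ u (G z (G z₀ (G z₀ v))) := by
      have a1 := congrArg (inner ℂ u) (hres z hz v)
      have a2 := congrArg (inner ℂ u) (hres z hz (G z₀ v))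
      rw [inner_sub_right, inner_smul_right] at a1 a2
      linear_combination a1 + (z - z₀) * a2
    rw [e1, norm_mul, norm_pow, Real.norm_eq_abs, abs_of_nonneg (by positivity), mul_comm]
    gcongr
    refine (norm_inner_le_norm _ _).trans ?_
    gcongr
    refine (hb z hz _).trans ?_
    gcongr
    refine (hb z₀ hz₀ _).trans ?_
    gcongr
    exact hb z₀ hz₀ _
  have h2 : DifferentiableAt ℂ (fun z => (inner ℂ u (G z v) -
      (inner ℂ u (G z₀ v) + (z - z₀) * inner ℂ u (G z₀ (G z₀ v))))
      + (inner ℂ u (G z₀ v) + (z - z₀) * inner ℂ u (G z₀ (G z₀ v)))) z₀ := by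
    apply h1.differentiableAt.add
    fun_prop
  simp only [sub_add_cancel] at h2
  exact h2.differentiableWithinAt

theorem core (Ω : Set ℂ) (hΩ : IsOpen Ω) (D : Submodule ℂ H) (L L' : D →ₗ[ℂ] H) (e : ι → H)
    (he : Orthonormal ℂ e) (σ : ℂ)
    (hL : ∀ x : D, L' x = L x + σ • emb e (cf e (x : H))) (c X : ℝ) (hc : 0 < c)
    (hX : 1 + ‖σ‖ * c⁻¹ ≤ X)
    (hlow : ∀ z ∈ Ω, ∀ y : D, c * ‖(y : H)‖ ≤ ‖shft D L' z y‖)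
    (hinv : ∀ z ∈ Ω, ∃ R, BInv D (shft D L' z) R) :
    ∃ f : ℂ → ℂ, DifferentiableOn ℂ f Ω ∧
      (∀ z ∈ Ω, ‖f z‖ ≤ (Fintype.card ι).factorial * X ^ Fintype.card ι) ∧
      (∀ z ∈ Ω, f z ≠ 0 → ∃ R, BInv D (shft D L z) R) ∧
      (∀ z ∈ Ω, f z = 0 → ∃ x : D, x ≠ 0 ∧ L x = z • (x : H)) ∧
      (∃ K : ℝ, 0 ≤ K ∧ ∀ z ∈ Ω, ∀ u : D, ‖f z‖ * ‖(u : H)‖ ≤ K * ‖shft D L z u‖) ∧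
      (∀ z ∈ Ω, (∀ y : D, c * ‖(y : H)‖ ≤ ‖shft D L z y‖) → (∃ R, BInv D (shft D L z) R) →
        1 ≤ ((Fintype.card ι).factorial * X ^ Fintype.card ι) * ‖f z‖) := by
  choose! G hG using hinv
  have hGb : ∀ z ∈ Ω, ∀ y, ‖G z y‖ ≤ c⁻¹ * ‖y‖ := fun z hz y =>
    binv_bound D _ _ (hG z hz) c hc (hlow z hz) y
  have hci : 0 ≤ c⁻¹ := by positivity
  have hX0 : 0 ≤ 1 + ‖σ‖ * c⁻¹ := by positivity
  have hfact : ∀ z ∈ Ω, ∀ x : D, shft D L z x = Phi e σ (G z) (shft D L' z x) := by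
    intro z hz x
    rw [Phi_apply, (hG z hz).1 x, shft_apply, shft_apply, hL]
    module
  have hfact2 : ∀ z ∈ Ω, ∀ y, ∃ hy : G z y ∈ D, shft D L z ⟨G z y, hy⟩ = Phi e σ (G z) y := by
    intro z hz y
    obtain ⟨hy, e1⟩ := (hG z hz).2 y
    exact ⟨hy, by rw [hfact z hz, e1]⟩
  refine ⟨fun z => (Fm e σ (G z)).det, ?_, ?_, ?_, ?_, ?_, ?_⟩
  · have hent : ∀ i j, DifferentiableOn ℂ (fun z => Fm e σ (G z) i j) Ω := by
      intro i j
      simp only [Fm, Matrix.sub_apply, Matrix.smul_apply, Matrix.of_apply]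
      have := entry_diff Ω hΩ D L' G hG c⁻¹ hci hGb (e i) (e j)
      exact (differentiableOn_const _).sub (this.const_smul σ)
    intro z hz
    apply DifferentiableAt.differentiableWithinAt
    simp only [Matrix.det_apply]
    apply DifferentiableAt.fun_sum
    intro τ _
    apply DifferentiableAt.fun_const_smul
    apply DifferentiableAt.fun_finsetProd
    intro i _
    exact (hent _ _).differentiableAt (hΩ.mem_nhds hz)
  · intro z hz
    exact det_bd _ _ (fun i j => (Fm_bd e he σ (G z) c⁻¹ (hGb z hz) i j).trans hX)
  · intro z hz hf
    let Rl : H →ₗ[ℂ] H := (Fm e σ (G z)).det⁻¹ • ((G z : H →ₗ[ℂ] H) ∘ₗ Adj e σ (G z))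
    have hRl : ∀ y, Rl y = G z ((Fm e σ (G z)).det⁻¹ • Adj e σ (G z) y) := fun y => by
      rw [map_smul]; rfl
    have hbd : ∃ K, ∀ y, ‖Rl y‖ ≤ K * ‖y‖ := by
      refine ⟨c⁻¹ * (‖(Fm e σ (G z)).det⁻¹‖ *
        (((Fintype.card ι).factorial * (1 + ‖σ‖ * c⁻¹) ^ Fintype.card ι) *
        (1 + ‖σ‖ * (Fintype.card ι * (Fintype.card ι * c⁻¹))))), fun y => ?_⟩
      · rw [hRl]
        refine (hGb z hz _).trans ?_
        rw [norm_smul, mul_assoc, mul_assoc]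
        gcongr
        exact Adj_bd e he σ (G z) c⁻¹ hci (hGb z hz) y
    obtain ⟨K, hK⟩ := hbd
    refine ⟨Rl.mkContinuous K hK, ?_, ?_⟩
    · intro x
      rw [LinearMap.mkContinuous_apply, hRl, hfact z hz, Adj_Phi e he, smul_smul,
        inv_mul_cancel₀ hf, one_smul, (hG z hz).1]
    · intro y
      rw [LinearMap.mkContinuous_apply]
      simp only [hRl]
      obtain ⟨hy, e1⟩ := hfact2 z hz ((Fm e σ (G z)).det⁻¹ • Adj e σ (G z) y)
      refine ⟨hy, ?_⟩
      rw [e1, map_smul, Phi_Adj e he, smul_smul, inv_mul_cancel₀ hf, one_smul]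
  · intro z hz hf
    obtain ⟨v, hv0, hv⟩ := Matrix.exists_mulVec_eq_zero_iff.mpr hf
    obtain ⟨hy, e1⟩ := hfact2 z hz (emb e v)
    rw [Phi_emb, hv, map_zero, shft_apply] at e1
    refine ⟨⟨G z (emb e v), hy⟩, ?_, sub_eq_zero.mp e1⟩
    intro h0
    obtain ⟨hy', e2⟩ := (hG z hz).2 (emb e v)
    rw [h0, map_zero] at e2
    apply hv0
    rw [← cf_emb e he v, ← e2, map_zero]
  · refine ⟨c⁻¹ * (((Fintype.card ι).factorial * (1 + ‖σ‖ * c⁻¹) ^ Fintype.card ι) *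
        (1 + ‖σ‖ * (Fintype.card ι * (Fintype.card ι * c⁻¹)))), by positivity, ?_⟩
    intro z hz u
    have h1 : (Fm e σ (G z)).det • (u : H) = G z (Adj e σ (G z) (shft D L z u)) := by
      rw [hfact z hz, Adj_Phi e he, map_smul, (hG z hz).1]
    rw [← norm_smul, h1, mul_assoc]
    refine (hGb z hz _).trans ?_
    gcongr
    exact Adj_bd e he σ (G z) c⁻¹ hci (hGb z hz) _
  · rintro z hz hlowz ⟨R, hR⟩
    have hRb := binv_bound D _ R hR c hc hlowz
    have hFN : Fm e σ (G z) * Fm e (-σ) R = 1 := by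
      apply Matrix.mulVec_injective
      ext v i
      rw [← Matrix.mulVec_mulVec, Matrix.one_mulVec]
      have h1 : emb e ((Fm e σ (G z)).mulVec ((Fm e (-σ) R).mulVec v)) = emb e v := by
        rw [← Phi_emb, ← Phi_emb]
        obtain ⟨hy, e1⟩ := hR.2 (emb e v)
        have h2 : Phi e (-σ) R (emb e v) = shft D L' z ⟨R (emb e v), hy⟩ := by
          rw [shft_apply] at e1
          rw [Phi_apply, shft_apply, hL]
          nth_rewrite 1 [← e1]
          module
        rw [h2, ← hfact z hz, e1]
      have h3 := congrArg (cf e) h1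
      rw [cf_emb e he, cf_emb e he] at h3
      rw [h3]
    have h4 := congrArg (fun A => ‖Matrix.det A‖) hFN
    simp only [Matrix.det_mul, norm_mul, Matrix.det_one, norm_one] at h4
    have h5 := det_bd _ X (fun i j => (Fm_bd e he (-σ) R c⁻¹ hRb i j).trans (by rw [norm_neg]; exact hX))
    rw [← h4, mul_comm]
    gcongr

end fredholm


open Asymptotics Filter Topology in
theorem count_lem (R₁ κ₀ κ δ δ' d Mf r ρ : ℝ) (ψ : ℂ → ℂ) (hR : 1 < R₁) (hκ1 : κ₀ < 1) (hκ : 0 ≤ κ)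
    (hb : ∀ a w : ℂ, ‖a‖ ≤ κ₀ → ‖w‖ ≤ κ₀ → ‖w - a‖ ≤ κ * ‖1 - (starRingEnd ℂ) a * w‖)
    (hψd : DifferentiableOn ℂ ψ (Metric.ball 0 R₁))
    (hψr : ∀ w ∈ Metric.ball (0 : ℂ) R₁, |(ψ w).re| < δ')
    (hψs : ∀ ω : ℂ, |ω.re| ≤ δ → |ω.im| ≤ d → ∃ w : ℂ, ‖w‖ ≤ κ₀ ∧ ψ w = ω)
    (hρ : 0 < ρ) (f : ℂ → ℂ) (hfd : DifferentiableOn ℂ f {z | |z.re - r| < δ' * ρ})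
    (hfb : ∀ z : ℂ, |z.re - r| < δ' * ρ → ‖f z‖ ≤ Mf) (z₀ : ℂ) (hz₀ : |z₀.re - r| ≤ δ * ρ)
    (hz₀' : |z₀.im| ≤ d * ρ) (Λ : Finset ℂ)
    (hΛ : ∀ z ∈ Λ, |z.re - r| ≤ δ * ρ ∧ |z.im| ≤ d * ρ) (n : ℂ → ℕ)
    (hO : ∀ l ∈ Λ, f =O[𝓝 l] (fun z => (z - l) ^ (n l))) :
    ‖f z₀‖ ≤ Mf * κ ^ (∑ l ∈ Λ, n l) := by
  set τ : ℂ → ℂ := fun w => r + ρ * ψ w with hτ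
  have hτre : ∀ w, (τ w).re = r + ρ * (ψ w).re := by intro w; simp [hτ]
  have hτΩ : ∀ w ∈ Metric.ball (0 : ℂ) R₁, |(τ w).re - r| < δ' * ρ := by
    intro w hw
    rw [hτre, add_sub_cancel_left, abs_mul, abs_of_pos hρ, mul_comm]
    have := hψr w hw
    gcongr
  have hρc : (ρ : ℂ) ≠ 0 := by exact_mod_cast hρ.ne'
  have hsurj : ∀ z : ℂ, |z.re - r| ≤ δ * ρ → |z.im| ≤ d * ρ → ∃ w : ℂ, ‖w‖ ≤ κ₀ ∧ τ w = z := by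
    intro z h1 h2
    have hre : ((z - r) / ρ : ℂ).re = (z.re - r) / ρ := by rw [Complex.div_ofReal_re]; simp
    have him : ((z - r) / ρ : ℂ).im = z.im / ρ := by rw [Complex.div_ofReal_im]; simp
    obtain ⟨w, hw, hw2⟩ := hψs ((z - r) / ρ)
      (by rw [hre, abs_div, abs_of_pos hρ, div_le_iff₀ hρ]; exact h1)
      (by rw [him, abs_div, abs_of_pos hρ, div_le_iff₀ hρ]; exact h2)
    refine ⟨w, hw, ?_⟩
    rw [hτ]
    simp only [hw2]
    field_simp
    ring
  have hτd : DifferentiableOn ℂ τ (Metric.ball 0 R₁) := by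
    apply DifferentiableOn.const_add
    exact hψd.const_mul _
  choose! w hw using hsurj
  have hinj : Set.InjOn w Λ := by
    intro a ha b hb' hab
    have h1 := (hw a (hΛ a ha).1 (hΛ a ha).2).2
    have h2 := (hw b (hΛ b hb').1 (hΛ b hb').2).2
    rw [← h1, ← h2, hab]
  have key := blaschke R₁ κ₀ κ Mf hR hκ1 hκ hb (w z₀) (hw z₀ hz₀ hz₀').1 (Λ.image w) (by
      intro a ha
      obtain ⟨l, hl, rfl⟩ := Finset.mem_image.mp ha
      exact (hw l (hΛ l hl).1 (hΛ l hl).2).1) (∑ l ∈ Λ, n l) (f ∘ τ) (fun a => n (τ a))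
    (hfd.comp hτd (fun a ha => hτΩ a ha))
    (fun a ha => hfb _ (hτΩ a (by simp [ha]; exact hR)))
    (by
      intro a ha
      obtain ⟨l, hl, rfl⟩ := Finset.mem_image.mp ha
      obtain ⟨h1, h2⟩ := hw l (hΛ l hl).1 (hΛ l hl).2
      have hτl : DifferentiableAt ℂ τ (w l) :=
        hτd.differentiableAt (Metric.isOpen_ball.mem_nhds (by simp; linarith))
      have hc : Tendsto τ (𝓝 (w l)) (𝓝 l) := by
        have := hτl.continuousAt.tendsto
        rwa [h2] at this
      have h3 := (hO l hl).comp_tendsto hc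
      have h4 := hτl.isBigO_sub
      rw [h2] at h4
      have h5 := h3.trans (h4.pow (n l))
      simp only [h2]
      exact h5.mono nhdsWithin_le_nhds)
    (by
      rw [Finset.sum_image hinj]
      apply Finset.sum_congr rfl
      intro l hl
      rw [(hw l (hΛ l hl).1 (hΛ l hl).2).2])
  rw [Function.comp_apply, (hw z₀ hz₀ hz₀').2] at key
  exact key

/-- generalized eigenspaces as submodules -/
def GE (D : Submodule ℂ H) (L : D →ₗ[ℂ] H) (z : ℂ) : ℕ → Submodule ℂ H
  | 0 => ⊥
  | n + 1 => ((GE D L z n).comap (shft D L z)).map D.subtype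

theorem mem_GE_succ (D : Submodule ℂ H) (L : D →ₗ[ℂ] H) (z : ℂ) (n : ℕ) (x : H) :
    x ∈ GE D L z (n + 1) ↔ ∃ hx : x ∈ D, shft D L z ⟨x, hx⟩ ∈ GE D L z n := by
  rw [GE, Submodule.mem_map]
  constructor
  · rintro ⟨y, hy, rfl⟩
    exact ⟨y.2, hy⟩
  · rintro ⟨hx, h⟩
    exact ⟨⟨x, hx⟩, h, rfl⟩

theorem mem_GE (A : H →ₗ.[ℂ] H) (z : ℂ) (n : ℕ) (x : H) :
    x ∈ pmGenEig A z n ↔ x ∈ GE A.domain A.toFun z n := by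
  induction n generalizing x with
  | zero => rw [pmGenEig, GE]; simp
  | succ n ih =>
    rw [mem_GE_succ, pmGenEig, Set.mem_ofPred_eq]
    constructor
    · rintro ⟨hx, h⟩
      exact ⟨hx, (ih _).1 h⟩
    · rintro ⟨hx, h⟩
      exact ⟨hx, (ih _).2 h⟩

theorem GE_mono (D : Submodule ℂ H) (L : D →ₗ[ℂ] H) (z : ℂ) : Monotone (GE D L z) := by
  apply monotone_nat_of_le_succ
  intro n
  induction n with
  | zero => rw [GE]; exact bot_le
  | succ n ih =>
    intro x hx
    rw [mem_GE_succ] at *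
    obtain ⟨hx, h⟩ := hx
    exact ⟨hx, ih h⟩

theorem GE_dim {ι : Type*} [Fintype ι] (e : ι → H) (D : Submodule ℂ H) (L : D →ₗ[ℂ] H) (z : ℂ)
    (h : ∀ x : D, shft D L z x = 0 → cf e (x : H) = 0 → x = 0) (n : ℕ) :
    FiniteDimensional ℂ (GE D L z n) ∧ Module.finrank ℂ (GE D L z n) ≤ n * Fintype.card ι := by
  induction n with
  | zero =>
    rw [GE]
    exact ⟨inferInstance, by simp⟩
  | succ n ih =>
    obtain ⟨ih1, ih2⟩ := ih
    rw [GE]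
    set W := (GE D L z n).comap (shft D L z) with hW
    let φ : W →ₗ[ℂ] (GE D L z n) × (ι → ℂ) :=
      LinearMap.prod (((shft D L z).domRestrict W).codRestrict (GE D L z n) (fun x => x.2))
        ((cf e ∘ₗ D.subtype).domRestrict W)
    have hφ : Function.Injective φ := by
      rw [injective_iff_map_eq_zero]
      intro x hx
      have h1 : shft D L z x.1 = 0 := congrArg (fun q => ((q.1 : GE D L z n) : H)) hx
      have h2 : cf e (x.1 : H) = 0 := congrArg Prod.snd hx
      exact Subtype.ext (h x.1 h1 h2)
    have hfd : FiniteDimensional ℂ W := FiniteDimensional.of_injective φ hφ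
    refine ⟨inferInstance, ?_⟩
    calc _ ≤ Module.finrank ℂ W := Submodule.finrank_map_le _ _
      _ ≤ Module.finrank ℂ ((GE D L z n) × (ι → ℂ)) := LinearMap.finrank_le_finrank_of_injective hφ
      _ = Module.finrank ℂ (GE D L z n) + Fintype.card ι := by simp
      _ ≤ n * Fintype.card ι + Fintype.card ι := by gcongr
      _ = _ := by ring

theorem chain (D : Submodule ℂ H) (L : D →ₗ[ℂ] H) (l : ℂ) (n : ℕ) :
    ∀ x : H, x ∈ GE D L l (n + 1) → x ∉ GE D L l n →
    ∃ u : ℂ → D, Continuous (fun z => (u z : H)) ∧ (u l : H) ≠ 0 ∧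
      ∀ z, shft D L z (u z) = -(z - l) ^ (n + 1) • x := by
  induction n with
  | zero =>
    intro x hx hx0
    obtain ⟨hxD, h⟩ := (mem_GE_succ _ _ _ _ _).1 hx
    rw [GE, Submodule.mem_bot] at h hx0
    refine ⟨fun _ => ⟨x, hxD⟩, continuous_const, hx0, fun z => ?_⟩
    rw [shft_apply] at *
    rw [sub_eq_zero.mp h]
    module
  | succ n ih =>
    intro x hx hx0
    obtain ⟨hxD, h⟩ := (mem_GE_succ _ _ _ _ _).1 hx
    rw [mem_GE_succ] at hx0
    push Not at hx0
    obtain ⟨u, hu1, hu2, hu3⟩ := ih _ h (hx0 hxD)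
    refine ⟨fun z => u z + (z - l) ^ (n + 1) • ⟨x, hxD⟩, ?_, ?_, ?_⟩
    · simp only [Submodule.coe_add, Submodule.coe_smul]
      fun_prop
    · simpa using hu2
    · intro z
      rw [map_add, hu3, map_smul, shft_apply, shft_apply]
      module

open Asymptotics Filter Topology in
theorem chain_O (D : Submodule ℂ H) (L : D →ₗ[ℂ] H) (Ω : Set ℂ) (hΩ : IsOpen Ω) (f : ℂ → ℂ)
    (K : ℝ) (hK0 : 0 ≤ K)
    (hK : ∀ z ∈ Ω, ∀ u : D, ‖f z‖ * ‖(u : H)‖ ≤ K * ‖shft D L z u‖) (l : ℂ) (hl : l ∈ Ω) (n : ℕ)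
    (x : H) (hx : x ∈ GE D L l (n + 1)) (hx0 : x ∉ GE D L l n) :
    f =O[𝓝 l] (fun z => (z - l) ^ (n + 1)) := by
  obtain ⟨u, hu1, hu2, hu3⟩ := chain D L l n x hx hx0
  have hpos : 0 < ‖(u l : H)‖ := norm_pos_iff.mpr hu2
  have hev : ∀ᶠ z in 𝓝 l, ‖(u l : H)‖ / 2 < ‖(u z : H)‖ :=
    (hu1.norm.tendsto l).eventually_const_lt (half_lt_self hpos)
  apply IsBigO.of_bound (K * ‖x‖ * (2 / ‖(u l : H)‖))
  filter_upwards [hev, hΩ.mem_nhds hl] with z hz hzΩ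
  have h1 := hK z hzΩ (u z)
  rw [hu3, norm_smul, norm_neg] at h1
  have h2 : ‖f z‖ * (‖(u l : H)‖ / 2) ≤ K * (‖(z - l) ^ (n + 1)‖ * ‖x‖) := by
    refine le_trans ?_ h1
    gcongr
  rw [← le_div_iff₀ (by positivity)] at h2
  refine h2.trans (le_of_eq ?_)
  field_simp


theorem count_total {ι : Type*} [Fintype ι] (e : ι → H) (D : Submodule ℂ H) (L : D →ₗ[ℂ] H)
    (R₁ κ₀ κ δ δ' d Mf r ρ : ℝ) (ψ : ℂ → ℂ) (hR : 1 < R₁) (hκ1 : κ₀ < 1) (hκ : 0 ≤ κ) (hκ' : κ < 1)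
    (hb : ∀ a w : ℂ, ‖a‖ ≤ κ₀ → ‖w‖ ≤ κ₀ → ‖w - a‖ ≤ κ * ‖1 - (starRingEnd ℂ) a * w‖)
    (hψd : DifferentiableOn ℂ ψ (Metric.ball 0 R₁))
    (hψr : ∀ w ∈ Metric.ball (0 : ℂ) R₁, |(ψ w).re| < δ')
    (hψs : ∀ ω : ℂ, |ω.re| ≤ δ → |ω.im| ≤ d → ∃ w : ℂ, ‖w‖ ≤ κ₀ ∧ ψ w = ω)
    (hδ : δ < δ')
    (hρ : 0 < ρ) (f : ℂ → ℂ) (hfd : DifferentiableOn ℂ f {z | |z.re - r| < δ' * ρ})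
    (hΩ : IsOpen {z : ℂ | |z.re - r| < δ' * ρ}) (hMf : 0 ≤ Mf)
    (hfb : ∀ z : ℂ, |z.re - r| < δ' * ρ → ‖f z‖ ≤ Mf) (z₀ : ℂ) (hz₀ : |z₀.re - r| ≤ δ * ρ)
    (hz₀' : |z₀.im| ≤ d * ρ) (h1 : 1 ≤ Mf * ‖f z₀‖) (K : ℝ) (hK0 : 0 ≤ K)
    (hK : ∀ z ∈ {z : ℂ | |z.re - r| < δ' * ρ}, ∀ u : D, ‖f z‖ * ‖(u : H)‖ ≤ K * ‖shft D L z u‖)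
    (hGE : ∀ z : ℂ, |z.re - r| < δ' * ρ → ∀ x : D, shft D L z x = 0 → cf e (x : H) = 0 → x = 0)
    (C₀ : ℕ) (hC₀ : Mf * Mf * κ ^ C₀ < 1) (Z : Set ℂ)
    (hZ : ∀ z ∈ Z, |z.re - r| ≤ δ * ρ ∧ |z.im| ≤ d * ρ) (s : Finset H)
    (hs : ∀ x ∈ s, ∃ z ∈ Z, ∃ n, x ∈ GE D L z n)
    (hli : LinearIndependent ℂ (fun v : s => (v : H))) : s.card ≤ C₀ * Fintype.card ι := by
  classical
  have hs0 : ∀ x ∈ s, x ≠ 0 := fun x hx => hli.ne_zero (⟨x, hx⟩ : s)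
  choose! l hl using hs
  have hex : ∀ x ∈ s, ∃ k, x ∈ GE D L (l x) (k + 1) ∧ x ∉ GE D L (l x) k := by
    intro x hx
    have hE := (hl x hx).2
    have h2 := Nat.find_spec hE
    have h3 : Nat.find hE ≠ 0 := by
      intro h0
      rw [h0, GE, Submodule.mem_bot] at h2
      exact hs0 x hx h2
    obtain ⟨k, hk⟩ := Nat.exists_eq_succ_of_ne_zero h3
    rw [hk] at h2
    exact ⟨k, h2, Nat.find_min hE (by omega)⟩
  choose! ν hν using hex
  set n : ℂ → ℕ := fun z => (s.filter (fun x => l x = z)).sup (fun x => ν x + 1) with hn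
  set Λ := s.image l with hΛ
  have hO : ∀ z ∈ Λ, ∃ x ∈ s, l x = z ∧ n z = ν x + 1 := by
    intro z hz
    obtain ⟨x, hx, hxz⟩ := Finset.mem_image.mp hz
    have hne : (s.filter (fun x => l x = z)).Nonempty := ⟨x, Finset.mem_filter.mpr ⟨hx, hxz⟩⟩
    obtain ⟨y, hy, hy2⟩ := Finset.exists_mem_eq_sup _ hne (fun x => ν x + 1)
    obtain ⟨hy3, hy4⟩ := Finset.mem_filter.mp hy
    exact ⟨y, hy3, hy4, hy2⟩
  have hΛZ : ∀ z ∈ Λ, |z.re - r| ≤ δ * ρ ∧ |z.im| ≤ d * ρ := by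
    intro z hz
    obtain ⟨x, hx, hxz⟩ := Finset.mem_image.mp hz
    rw [← hxz]
    exact hZ _ (hl x hx).1
  have hlt : ∀ z : ℂ, |z.re - r| ≤ δ * ρ → |z.re - r| < δ' * ρ := fun z hz =>
    lt_of_le_of_lt hz (by gcongr)
  have key := count_lem R₁ κ₀ κ δ δ' d Mf r ρ ψ hR hκ1 hκ hb hψd hψr hψs hρ f hfd hfb z₀ hz₀ hz₀' Λ
    hΛZ n (by
      intro z hz
      obtain ⟨x, hx, hxz, hnz⟩ := hO z hz
      rw [hnz]
      have := hν x hx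
      rw [hxz] at this
      exact chain_O D L _ hΩ f K hK0 hK z (hlt z (hΛZ z hz).1) (ν x) x this.1 this.2)
  have hN : ∑ z ∈ Λ, n z ≤ C₀ := by
    by_contra hcon
    push Not at hcon
    have h2 : κ ^ (∑ z ∈ Λ, n z) ≤ κ ^ C₀ := pow_le_pow_of_le_one hκ hκ'.le hcon.le
    have h3 : Mf * ‖f z₀‖ ≤ Mf * (Mf * κ ^ C₀) := by
      gcongr
      exact key.trans (by gcongr)
    linarith
  have hcard : s.card = ∑ z ∈ Λ, (s.filter (fun x => l x = z)).card :=
    Finset.card_eq_sum_card_image l s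
  have hpart : ∀ z ∈ Λ, (s.filter (fun x => l x = z)).card ≤ n z * Fintype.card ι := by
    intro z hz
    obtain ⟨hfd', hfr⟩ := GE_dim e D L z (hGE z (hlt z (hΛZ z hz).1)) (n z)
    set t := s.filter (fun x => l x = z) with ht
    have htli : LinearIndependent ℂ (fun v : t => (v : H)) := by
      have := hli.comp (fun v : t => (⟨v.1, (Finset.mem_filter.mp v.2).1⟩ : s)) (by
        intro a b hab
        exact Subtype.ext (congrArg (fun q : s => (q : H)) hab))
      exact this
    have hspan : Submodule.span ℂ (t : Set H) ≤ GE D L z (n z) := by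
      rw [Submodule.span_le]
      intro x hx
      have hx' := Finset.mem_filter.mp hx
      have h3 := (hν x hx'.1).1
      rw [hx'.2] at h3
      apply GE_mono D L z _ h3
      exact Finset.le_sup (f := fun x => ν x + 1) hx
    have h4 := finrank_span_finset_eq_card htli
    rw [← h4]
    exact (Submodule.finrank_mono hspan).trans hfr
  calc s.card = _ := hcard
    _ ≤ ∑ z ∈ Λ, n z * Fintype.card ι := Finset.sum_le_sum hpart
    _ = (∑ z ∈ Λ, n z) * Fintype.card ι := by rw [Finset.sum_mul]
    _ ≤ _ := by gcongr


theorem mem_pmEig (T : H →ₗ.[ℂ] H) (z : ℂ) (x : H) :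
    x ∈ pmEigenspace T z ↔ ∃ hx : x ∈ T.domain, T.toFun ⟨x, hx⟩ = z • x := by
  rw [pmEigenspace, Submodule.mem_map]
  constructor
  · rintro ⟨y, hy, rfl⟩
    refine ⟨y.2, ?_⟩
    rw [LinearMap.mem_ker, LinearMap.sub_apply, sub_eq_zero] at hy
    exact hy
  · rintro ⟨hx, h⟩
    refine ⟨⟨x, hx⟩, ?_, rfl⟩
    rw [LinearMap.mem_ker, LinearMap.sub_apply, sub_eq_zero]
    exact h

theorem emb_norm {ι : Type*} [Fintype ι] (e : ι → H) (he : Orthonormal ℂ e) (v : ι → ℂ) :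
    ‖emb e v‖ ^ 2 = ∑ i, ‖v i‖ ^ 2 := by
  classical
  rw [emb_apply, @norm_sq_eq_re_inner ℂ, he.inner_sum]
  simp [Complex.conj_mul', ← Complex.ofReal_pow]

theorem emb_cf_sym {ι : Type*} [Fintype ι] (e : ι → H) (a b : H) :
    inner ℂ (emb e (cf e a)) b = inner ℂ a (emb e (cf e b)) := by
  simp only [emb_apply, cf_apply, sum_inner, inner_sum, inner_smul_left, inner_smul_right,
    inner_conj_symm]
  exact Finset.sum_congr rfl (fun i _ => mul_comm _ _)

theorem gap_basis (T : H →ₗ.[ℂ] H)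
    (hS : ∀ a b : T.domain, inner ℂ (T.toFun a) (b : H) = inner ℂ (a : H) (T.toFun b))
    (r s : ℝ) (hs : 0 < s) (ev : Finset ℝ)
    (hfd : ∀ ν ∈ ev, FiniteDimensional ℂ (pmEigenspace T (ν : ℂ)))
    (hres : ∀ ν : ℝ, |ν - r| < s → ν ∉ ev → ∃ R, BInv T.domain (shft T.domain T.toFun (ν : ℂ)) R) :
    ∃ (ι : Type) (_ : Fintype ι) (e : ι → H), Orthonormal ℂ e ∧
      Fintype.card ι ≤ ∑ ν ∈ ev, Module.finrank ℂ (pmEigenspace T (ν : ℂ)) ∧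
      ∀ y : T.domain, s * ‖(y : H)‖ ≤
        ‖shft T.domain T.toFun (r : ℂ) y + ((2 * s : ℝ) : ℂ) • emb e (cf e (y : H))‖ := by
  classical
  set ev' := ev.filter (fun ν => |ν - r| < s) with hev'
  have inst : ∀ ν : {ν // ν ∈ ev'}, FiniteDimensional ℂ (pmEigenspace T (ν.1 : ℂ)) :=
    fun ν => hfd ν.1 (Finset.mem_filter.mp ν.2).1
  let ι := Σ ν : {ν // ν ∈ ev'}, Fin (Module.finrank ℂ (pmEigenspace T (ν.1 : ℂ)))
  let e : ι → H := fun i => (stdOrthonormalBasis ℂ (pmEigenspace T (i.1.1 : ℂ)) i.2 : H)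
  have heig : ∀ i : ι, ∃ hx : e i ∈ T.domain, T.toFun ⟨e i, hx⟩ = (i.1.1 : ℂ) • e i := fun i =>
    (mem_pmEig T _ _).1 (stdOrthonormalBasis ℂ (pmEigenspace T (i.1.1 : ℂ)) i.2).2
  choose heD heT using heig
  have hν : ∀ i : ι, |i.1.1 - r| < s := fun i => (Finset.mem_filter.mp i.1.2).2
  have he : Orthonormal ℂ e := by
    constructor
    · rintro ⟨ν, i⟩
      have := (stdOrthonormalBasis ℂ (pmEigenspace T (ν.1 : ℂ))).orthonormal.1 i
      exact this
    · rintro ⟨ν, i⟩ ⟨μ, j⟩ hij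
      by_cases h : ν = μ
      · subst h
        have hne : i ≠ j := fun h => hij (by rw [h])
        have := (stdOrthonormalBasis ℂ (pmEigenspace T (ν.1 : ℂ))).orthonormal.2 hne
        exact this
      · have h1 := hS ⟨_, heD ⟨ν, i⟩⟩ ⟨_, heD ⟨μ, j⟩⟩
        rw [heT, heT, inner_smul_left, inner_smul_right, Complex.conj_ofReal] at h1
        have h2 : ((ν.1 : ℂ) - (μ.1 : ℂ)) * inner ℂ (e ⟨ν, i⟩) (e ⟨μ, j⟩) = 0 := by
          linear_combination h1
        rcases mul_eq_zero.mp h2 with h3 | h3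
        · exfalso
          apply h
          apply Subtype.ext
          exact_mod_cast sub_eq_zero.mp h3
        · exact h3
  refine ⟨ι, inferInstance, e, he, ?_, ?_⟩
  · rw [Fintype.card_sigma]
    simp only [Fintype.card_fin]
    rw [Finset.sum_coe_sort ev' (fun ν => Module.finrank ℂ (pmEigenspace T (ν : ℂ)))]
    exact Finset.sum_le_sum_of_subset (Finset.filter_subset _ _)
  · intro y
    set E := Submodule.span ℂ (Set.range e) with hE
    have hEo : ∀ x : H, (∀ i, inner ℂ (e i) x = 0) → x ∈ Eᗮ := by
      intro x hx
      rw [Submodule.mem_orthogonal]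
      intro u hu
      induction hu using Submodule.span_induction with
      | mem u hu => obtain ⟨i, rfl⟩ := hu; exact hx i
      | zero => simp
      | add a b _ _ h1 h2 => rw [inner_add_left, h1, h2, add_zero]
      | smul c a _ h1 => rw [inner_smul_left, h1, mul_zero]
    have hembD : ∀ v, emb e v ∈ T.domain := fun v => by
      rw [emb_apply]
      exact Submodule.sum_mem _ (fun i _ => Submodule.smul_mem _ _ (heD i))
    have hembT : ∀ v, T.toFun ⟨emb e v, hembD v⟩ = emb e (fun i => (i.1.1 : ℂ) * v i) := by
      intro v
      have : (⟨emb e v, hembD v⟩ : T.domain) = ∑ i, v i • ⟨e i, heD i⟩ := by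
        apply Subtype.ext
        simp [emb_apply]
      rw [this, map_sum, emb_apply]
      apply Finset.sum_congr rfl
      intro i _
      rw [map_smul, heT, smul_smul, mul_comm]
    set v := cf e (y : H) with hv
    set y' : T.domain := y - ⟨emb e v, hembD v⟩ with hy'
    have hy'c : (y' : H) = y - emb e v := rfl
    have ho1 : ∀ i, inner ℂ (e i) (y' : H) = 0 := by
      intro i
      rw [hy'c, inner_sub_right, ← cf_apply, ← cf_apply, cf_emb e he, hv, sub_self]
    have ho2 : ∀ i, inner ℂ (e i) (T.toFun y') = 0 := by
      intro i
      have := hS ⟨e i, heD i⟩ y'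
      rw [heT, inner_smul_left, ho1, mul_zero] at this
      exact this.symm
    have hgb := gap_bound T.domain T.toFun hS r s hs ev E (by
        intro ν hνs x hx
        by_cases hνe : ν ∈ ev
        · have hν' : ν ∈ ev' := Finset.mem_filter.mpr ⟨hνe, hνs⟩
          have hmem : (x : H) ∈ pmEigenspace T (ν : ℂ) := (mem_pmEig _ _ _).2 ⟨x.2, hx⟩
          have h1 := (stdOrthonormalBasis ℂ (pmEigenspace T (((⟨ν, hν'⟩ : {ν // ν ∈ ev'}).1 : ℝ) : ℂ))).sum_repr ⟨x, hmem⟩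
          have h2 := congrArg (fun q : pmEigenspace T (ν : ℂ) => (q : H)) h1
          simp only [Submodule.coe_sum, Submodule.coe_smul] at h2
          rw [← h2]
          apply Submodule.sum_mem
          intro i _
          apply Submodule.smul_mem
          exact Submodule.subset_span ⟨⟨⟨ν, hν'⟩, i⟩, rfl⟩
        · obtain ⟨R, hR⟩ := hres ν hνs hνe
          have := hR.1 x
          rw [shft_apply, hx, sub_self, map_zero] at this
          rw [← this]; exact Submodule.zero_mem _) hres y' (hEo _ ho2) (hEo _ ho1)
    set a := shft T.domain T.toFun (r : ℂ) y' with ha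
    have hdec : shft T.domain T.toFun (r : ℂ) y + ((2 * s : ℝ) : ℂ) • emb e v
        = a + emb e (fun i => ((i.1.1 - r + 2 * s : ℝ) : ℂ) * v i) := by
      have e1 : y = y' + ⟨emb e v, hembD v⟩ := by rw [hy']; abel
      have e2 : shft T.domain T.toFun (r : ℂ) y = a + shft T.domain T.toFun (r : ℂ) ⟨emb e v, hembD v⟩ := by
        rw [ha, ← map_add, ← e1]
      rw [e2, shft_apply, hembT, add_assoc]
      congr 1
      simp only
      rw [← map_smul (emb e), ← map_smul (emb e), ← map_sub, ← map_add]
      congr 1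
      ext i
      simp
      ring
    have horth : ∀ w, inner ℂ a (emb e w) = 0 := by
      intro w
      rw [emb_apply, inner_sum]
      apply Finset.sum_eq_zero
      intro i _
      rw [inner_smul_right, ← inner_conj_symm, ha, shft_apply, inner_sub_right, inner_smul_right, ho1, ho2]
      simp
    have horth2 : inner ℂ (y' : H) (emb e v) = 0 := by
      rw [emb_apply, inner_sum]
      apply Finset.sum_eq_zero
      intro i _
      rw [inner_smul_right, ← inner_conj_symm, ho1]
      simp
    rw [hdec]
    apply le_of_sq_le_sq _ (norm_nonneg _)
    have p1 := norm_add_sq_eq_norm_sq_add_norm_sq_of_inner_eq_zero (𝕜 := ℂ) _ _ (horth (fun i => ((i.1.1 - r + 2 * s : ℝ) : ℂ) * v i))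
    have p2 := norm_add_sq_eq_norm_sq_add_norm_sq_of_inner_eq_zero (𝕜 := ℂ) _ _ horth2
    rw [hy'c, sub_add_cancel, ← hy'c] at p2
    rw [pow_two, pow_two, mul_mul_mul_comm, p1, p2]
    have q1 : (s * ‖(y' : H)‖) * (s * ‖(y' : H)‖) ≤ ‖a‖ * ‖a‖ := by gcongr
    have q2 : s ^ 2 * ‖emb e v‖ ^ 2 ≤ ‖emb e (fun i => ((i.1.1 - r + 2 * s : ℝ) : ℂ) * v i)‖ ^ 2 := by
      rw [emb_norm e he, emb_norm e he, Finset.mul_sum]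
      apply Finset.sum_le_sum
      intro i _
      rw [norm_mul, mul_pow, Complex.norm_real, Real.norm_eq_abs, sq_abs]
      have := abs_lt.mp (hν i)
      gcongr
      linarith
    nlinarith


theorem emb_cf_le {ι : Type*} [Fintype ι] (e : ι → H) (he : Orthonormal ℂ e) (y : H) :
    ‖emb e (cf e y)‖ ≤ ‖y‖ := by
  apply le_of_sq_le_sq _ (norm_nonneg _)
  rw [emb_norm e he]
  exact he.sum_inner_products_le y

theorem nonreal_inv (D : Submodule ℂ H) (S C : D →ₗ[ℂ] H)
    (hS : ∀ a b : D, inner ℂ (S a) (b : H) = inner ℂ (a : H) (S b))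
    (hnr : ∀ z : ℂ, z.im ≠ 0 → ∃ R, BInv D (shft D S z) R)
    (r ρ d c₂ q : ℝ) (hd : 0 < d * ρ) (hq0 : 0 ≤ q) (hq1 : q < 1)
    (hX : ∀ y : D, ∀ u : ℝ, 0 ≤ u → d * ρ * ‖(y : H)‖ ≤ u → ‖S y‖ ≤ u + (|r| + c₂ * ρ) * ‖(y : H)‖ →
      ‖C y‖ ≤ q * u) (z : ℂ) (hre : |z.re| ≤ |r| + c₂ * ρ) (him : d * ρ ≤ |z.im|) :
    (∀ y : D, (1 - q) * (d * ρ) * ‖(y : H)‖ ≤ ‖shft D (S + C) z y‖) ∧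
      ∃ R, BInv D (shft D (S + C) z) R := by
  have hsp : shft D (S + C) z = shft D S z + C := by
    unfold shft; abel
  have h1 : ∀ y : D, d * ρ * ‖(y : H)‖ ≤ ‖shft D S z y‖ := fun y =>
    le_trans (by gcongr) (sym_norm_im D S hS z y)
  have h2 : ∀ y : D, ‖C y‖ ≤ q * ‖shft D S z y‖ := by
    intro y
    apply hX y _ (norm_nonneg _) (h1 y)
    have h3 := sym_norm_re D S hS z y
    have h4 : S y = shft D S (z.re : ℂ) y + (z.re : ℂ) • (y : H) := by rw [shft_apply]; module
    rw [h4]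
    refine (norm_add_le _ _).trans ?_
    rw [norm_smul, Complex.norm_real, Real.norm_eq_abs]
    gcongr
  constructor
  · intro y
    rw [hsp, LinearMap.add_apply]
    have h5 := norm_sub_le_norm_add (shft D S z y) (C y)
    have h6 := h2 y
    have h7 := mul_le_mul_of_nonneg_left (h1 y) (by linarith : 0 ≤ 1 - q)
    linarith
  · have hz : z.im ≠ 0 := by
      intro h0
      rw [h0] at him; simp at him; linarith
    obtain ⟨R, hR⟩ := hnr z hz
    rw [hsp]
    exact binv_pert D _ C R hR q hq0 hq1 h2

theorem gap_main (T : H →ₗ.[ℂ] H) (C : T.domain →ₗ[ℂ] H)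
    (hS : ∀ a b : T.domain, inner ℂ (T.toFun a) (b : H) = inner ℂ (a : H) (T.toFun b))
    (hnr : ∀ z : ℂ, z.im ≠ 0 → ∃ R, BInv T.domain (shft T.domain T.toFun z) R)
    (R₁ κ₀ κ δ δ' d X r ρ b₁ q : ℝ) (m : ℕ)
    (ψ : ℂ → ℂ) (hR : 1 < R₁) (hκ1 : κ₀ < 1) (hκ : 0 ≤ κ) (hκ' : κ < 1)
    (hb : ∀ a w : ℂ, ‖a‖ ≤ κ₀ → ‖w‖ ≤ κ₀ → ‖w - a‖ ≤ κ * ‖1 - (starRingEnd ℂ) a * w‖)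
    (hψd : DifferentiableOn ℂ ψ (Metric.ball 0 R₁))
    (hψr : ∀ w ∈ Metric.ball (0 : ℂ) R₁, |(ψ w).re| < δ')
    (hψs : ∀ ω : ℂ, |ω.re| ≤ δ → |ω.im| ≤ d → ∃ w : ℂ, ‖w‖ ≤ κ₀ ∧ ψ w = ω)
    (hδ0 : 0 < δ) (hδ : δ < δ') (hd : 0 < d) (hb₁ : b₁ = δ' + d) (hρ : 0 < ρ) (hq0 : 0 ≤ q) (hq1 : q < 1)
    (hX : X = 1 + 2 * b₁ / ((1 - q) * d))
    (hXC : ∀ y : T.domain, ∀ u : ℝ, 0 ≤ u → d * ρ * ‖(y : H)‖ ≤ u →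
      ‖T.toFun y‖ ≤ u + (|r| + (δ' + 2 * b₁) * ρ) * ‖(y : H)‖ → ‖C y‖ ≤ q * u)
    (ev : Finset ℝ)
    (hfd : ∀ ν ∈ ev, FiniteDimensional ℂ (pmEigenspace T (ν : ℂ)))
    (hres : ∀ ν : ℝ, |ν - r| < b₁ * ρ → ν ∉ ev →
      ∃ R, BInv T.domain (shft T.domain T.toFun (ν : ℂ)) R)
    (hm : (∑ ν ∈ ev, Module.finrank ℂ (pmEigenspace T (ν : ℂ))) ≤ m)
    (C₀ : ℕ) (hC₀ : (m.factorial * X ^ m) * (m.factorial * X ^ m) * κ ^ C₀ < 1) :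
    (∀ z : ℂ, |z.re - r| ≤ δ * ρ → (¬ ∃ R, BInv T.domain (shft T.domain (T.toFun + C) z) R) →
      ∃ x : T.domain, x ≠ 0 ∧ (T.toFun + C) x = z • (x : H)) ∧
    ∀ s : Finset H, (∀ x ∈ s, ∃ z : ℂ, (|z.re - r| ≤ δ * ρ ∧
        ¬ ∃ R, BInv T.domain (shft T.domain (T.toFun + C) z) R) ∧
        ∃ n, x ∈ GE T.domain (T.toFun + C) z n) →
      LinearIndependent ℂ (fun v : s => (v : H)) → s.card ≤ C₀ * m := by
  classical
  have hδ'0 : 0 < δ' := hδ0.trans hδ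
  have hb₁0 : 0 < b₁ := by rw [hb₁]; linarith
  have hs : 0 < b₁ * ρ := by positivity
  obtain ⟨ι, hι, e, he, hcard, hlow0⟩ := gap_basis T hS r (b₁ * ρ) hs ev hfd hres
  have hcm : Fintype.card ι ≤ m := hcard.trans hm
  set σ : ℂ := ((2 * (b₁ * ρ) : ℝ) : ℂ) with hσ
  have hσn : ‖σ‖ = 2 * (b₁ * ρ) := by
    rw [hσ, Complex.norm_real, Real.norm_eq_abs, abs_of_pos (by positivity)]
  set Q : T.domain →ₗ[ℂ] H := σ • (emb e ∘ₗ cf e ∘ₗ T.domain.subtype) with hQ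
  have hQa : ∀ y : T.domain, Q y = σ • emb e (cf e (y : H)) := fun y => rfl
  have hQn : ∀ y : T.domain, ‖Q y‖ ≤ 2 * (b₁ * ρ) * ‖(y : H)‖ := by
    intro y
    rw [hQa, norm_smul, hσn]
    gcongr
    exact emb_cf_le e he _
  have hS' : ∀ a b : T.domain, inner ℂ ((T.toFun + Q) a) (b : H) = inner ℂ (a : H) ((T.toFun + Q) b) := by
    intro a b
    rw [LinearMap.add_apply, LinearMap.add_apply, inner_add_left, inner_add_right, hS, hQa, hQa,
      inner_smul_left, inner_smul_right, emb_cf_sym, hσ, Complex.conj_ofReal]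
  set c : ℝ := (1 - q) * (d * ρ) with hc
  have hc0 : 0 < c := by
    have : 0 < 1 - q := by linarith
    positivity
  -- lower bound for the symmetric part
  have hl1 : ∀ z : ℂ, |z.re - r| ≤ δ' * ρ → ∀ y : T.domain,
      d * ρ * ‖(y : H)‖ ≤ ‖shft T.domain (T.toFun + Q) (z.re : ℂ) y‖ := by
    intro z hz y
    have h1 := hlow0 y
    have h2 : shft T.domain T.toFun (r : ℂ) y + σ • emb e (cf e (y : H))
        = shft T.domain (T.toFun + Q) (z.re : ℂ) y + ((z.re - r : ℝ) : ℂ) • (y : H) := by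
      rw [shft_apply, shft_apply, LinearMap.add_apply, hQa]; push_cast; module
    rw [h2] at h1
    have h3 := norm_add_le (shft T.domain (T.toFun + Q) (z.re : ℂ) y) (((z.re - r : ℝ) : ℂ) • (y : H))
    rw [norm_smul, Complex.norm_real, Real.norm_eq_abs] at h3
    have h4 := mul_le_mul_of_nonneg_right hz (norm_nonneg (y : H))
    rw [hb₁] at h1
    nlinarith
  have hre : ∀ z : ℂ, |z.re - r| ≤ δ' * ρ → |z.re| ≤ |r| + δ' * ρ := by
    intro z hz
    have := abs_add_le (z.re - r) r
    rw [sub_add_cancel] at this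
    linarith
  have hC1 : ∀ z : ℂ, |z.re - r| ≤ δ' * ρ → ∀ y : T.domain, ‖C y‖ ≤ q * ‖shft T.domain (T.toFun + Q) z y‖ := by
    intro z hz y
    have h3 := sym_norm_re T.domain (T.toFun + Q) hS' z y
    apply hXC y _ (norm_nonneg _) ((hl1 z hz y).trans h3)
    have h4 : T.toFun y = shft T.domain (T.toFun + Q) (z.re : ℂ) y + (z.re : ℂ) • (y : H) - Q y := by
      rw [shft_apply, LinearMap.add_apply]; module
    rw [h4]
    refine (norm_sub_le _ _).trans ?_
    have h5 := norm_add_le (shft T.domain (T.toFun + Q) (z.re : ℂ) y) ((z.re : ℂ) • (y : H))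
    rw [norm_smul, Complex.norm_real, Real.norm_eq_abs] at h5
    have h6 := mul_le_mul_of_nonneg_right (hre z hz) (norm_nonneg (y : H))
    have h7 := hQn y
    linarith
  set L : T.domain →ₗ[ℂ] H := T.toFun + C with hL
  set L' : T.domain →ₗ[ℂ] H := T.toFun + Q + C with hL'
  have hsp : ∀ z, shft T.domain L' z = shft T.domain (T.toFun + Q) z + C := by
    intro z; rw [hL']; unfold shft; abel
  have hlow : ∀ z : ℂ, |z.re - r| ≤ δ' * ρ → ∀ y : T.domain, c * ‖(y : H)‖ ≤ ‖shft T.domain L' z y‖ := by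
    intro z hz y
    rw [hsp, LinearMap.add_apply]
    have h5 := norm_sub_le_norm_add (shft T.domain (T.toFun + Q) z y) (C y)
    have h6 := hC1 z hz y
    have h7 := mul_le_mul_of_nonneg_left ((hl1 z hz y).trans (sym_norm_re T.domain (T.toFun + Q) hS' z y))
      (by linarith : 0 ≤ 1 - q)
    rw [hc]
    linarith
  have hinv : ∀ z : ℂ, |z.re - r| ≤ δ' * ρ → ∃ R, BInv T.domain (shft T.domain L' z) R := by
    intro z hz
    refine binv_line T.domain L' z.re c hc0 (fun η y => hlow ⟨z.re, η⟩ hz y) (4 * (b₁ * ρ)) ?_ z.im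
    set z' : ℂ := ⟨z.re, 4 * (b₁ * ρ)⟩ with hz'
    have him : z'.im = 4 * (b₁ * ρ) := rfl
    obtain ⟨R, hR'⟩ := hnr z' (by rw [him]; positivity)
    obtain ⟨R2, hR2⟩ := binv_pert T.domain _ Q R hR' (1 / 2) (by norm_num) (by norm_num) (by
      intro y
      have h1 := sym_norm_im T.domain T.toFun hS z' y
      rw [him, abs_of_pos (by positivity)] at h1
      have := hQn y
      linarith)
    have e1 : shft T.domain T.toFun z' + Q = shft T.domain (T.toFun + Q) z' := by unfold shft; abel
    rw [e1] at hR2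
    rw [hsp]
    exact binv_pert T.domain _ C R2 hR2 q hq0 hq1 (hC1 z' hz)
  have hnonreal : ∀ z : ℂ, |z.re - r| ≤ δ' * ρ → d * ρ ≤ |z.im| →
      (∀ y : T.domain, c * ‖(y : H)‖ ≤ ‖shft T.domain L z y‖) ∧ ∃ R, BInv T.domain (shft T.domain L z) R := by
    intro z hz him
    apply nonreal_inv T.domain T.toFun C hS hnr r ρ d (δ' + 2 * b₁) q (by positivity) hq0 hq1 hXC z _ him
    have := hre z hz
    have : 0 < b₁ * ρ := hs
    linarith
  have hΩo : IsOpen {z : ℂ | |z.re - r| < δ' * ρ} :=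
    isOpen_lt (by fun_prop) continuous_const
  have hX1 : 1 + ‖σ‖ * c⁻¹ = X := by
    have : 1 - q ≠ 0 := by linarith
    rw [hσn, hX, hc]
    field_simp
  have hXge : 1 ≤ X := by rw [← hX1]; have : 0 ≤ ‖σ‖ * c⁻¹ := by positivity
                          linarith
  obtain ⟨f, hf1, hf2, hf3, hf4, ⟨K, hK0, hK⟩, hf6⟩ := core {z : ℂ | |z.re - r| < δ' * ρ} hΩo T.domain L L' e he σ
    (fun x => by simp only [hL, hL', LinearMap.add_apply, hQa]; abel) c X hc0 hX1.le
    (fun z hz => hlow z (le_of_lt hz)) (fun z hz => hinv z (le_of_lt hz))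
  have hMle : ((Fintype.card ι).factorial * X ^ Fintype.card ι : ℝ) ≤ m.factorial * X ^ m := by
    have h1 : ((Fintype.card ι).factorial : ℝ) ≤ m.factorial := by
      exact_mod_cast Nat.factorial_le hcm
    have h2 : X ^ Fintype.card ι ≤ X ^ m := pow_le_pow_right₀ hXge hcm
    have h3 : 0 ≤ X ^ Fintype.card ι := by positivity
    gcongr
  have hlt : ∀ z : ℂ, |z.re - r| ≤ δ * ρ → |z.re - r| < δ' * ρ := fun z hz =>
    lt_of_le_of_lt hz (by gcongr)
  constructor
  · intro z hz hnr'
    by_cases h0 : f z = 0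
    · exact hf4 z (hlt z hz) h0
    · exact absurd (hf3 z (hlt z hz) h0) hnr'
  · intro s hs' hli
    have hz₀im : |(⟨r, d * ρ⟩ : ℂ).im| = d * ρ := abs_of_pos (by positivity)
    have hz₀re : |(⟨r, d * ρ⟩ : ℂ).re - r| = 0 := by simp
    have hz₀ : |(⟨r, d * ρ⟩ : ℂ).re - r| ≤ δ * ρ := by rw [hz₀re]; positivity
    have hanch := hnonreal ⟨r, d * ρ⟩ (hlt _ hz₀).le hz₀im.ge
    have h1 := hf6 ⟨r, d * ρ⟩ (hlt _ hz₀) hanch.1 hanch.2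
    refine (count_total e T.domain L R₁ κ₀ κ δ δ' d (m.factorial * X ^ m) r ρ ψ hR hκ1 hκ hκ' hb hψd hψr hψs hδ hρ f
      hf1 hΩo (by positivity) (fun z hz => (hf2 z hz).trans hMle) ⟨r, d * ρ⟩ hz₀ hz₀im.le
      (h1.trans (by gcongr)) K hK0 hK ?_ C₀ hC₀
      {z : ℂ | |z.re - r| ≤ δ * ρ ∧ ¬ ∃ R, BInv T.domain (shft T.domain L z) R} ?_ s hs' hli).trans (by gcongr)
    · intro z hz x hx1 hx2
      have h2 := hlow z hz.le x
      have h3 : shft T.domain L' z x = shft T.domain L z x + Q x := by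
        simp only [shft_apply, hL, hL', LinearMap.add_apply]; module
      rw [h3, hx1, hQa, hx2, map_zero, smul_zero, add_zero, norm_zero] at h2
      have h4 : ‖(x : H)‖ ≤ 0 := by
        by_contra hcon
        push Not at hcon
        have : 0 < c * ‖(x : H)‖ := by positivity
        linarith
      exact Subtype.ext (norm_le_zero_iff.mp h4)
    · rintro z ⟨hz1, hz2⟩
      refine ⟨hz1, ?_⟩
      by_contra hcon
      push Not at hcon
      exact hz2 (hnonreal z (hlt z hz1).le hcon.le).2


theorem half_gap (p b₁ a c : ℝ)
    (h : (2 : ℝ) ^ (1 - p) * b₁ * |c + a| ^ p ≤ c - a) :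
    b₁ * |(a + c) / 2| ^ p ≤ (c - a) / 2 := by
  have e1 : |c + a| = 2 * |(a + c) / 2| := by
    rw [abs_div, abs_of_pos (by norm_num : (0 : ℝ) < 2), add_comm c a]; ring
  rw [e1, Real.mul_rpow (by norm_num) (abs_nonneg _)] at h
  have e2 : (2 : ℝ) ^ (1 - p) * 2 ^ p = 2 := by
    rw [← Real.rpow_add (by norm_num)]; simp
  have e3 : (2 : ℝ) ^ (1 - p) * b₁ * (2 ^ p * |(a + c) / 2| ^ p)
      = ((2 : ℝ) ^ (1 - p) * 2 ^ p) * (b₁ * |(a + c) / 2| ^ p) := by ring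
  rw [e3, e2] at h
  linarith

theorem part_one (T : H →ₗ.[ℂ] H) (C : T.domain →ₗ[ℂ] H)
    (hS : ∀ a b : T.domain, inner ℂ (T.toFun a) (b : H) = inner ℂ (a : H) (T.toFun b))
    (hnr : ∀ z : ℂ, z.im ≠ 0 → ∃ R, BInv T.domain (shft T.domain T.toFun z) R)
    (p b M h : ℝ) (hp : 0 ≤ p) (hp1 : p < 1) (hb : 0 < b) (hbh : b < h)
    (hM : 0 ≤ M) (hM0 : p = 0 → M = 0)
    (hC : ∀ y : T.domain, ‖C y‖ ≤ b * ‖T.toFun y‖ ^ p * ‖(y : H)‖ ^ (1 - p) + M * ‖(y : H)‖) :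
    ∃ R₀ : ℝ, 0 < R₀ ∧ ∀ z : ℂ,
      (¬ ∃ R, BInv T.domain (shft T.domain (T.toFun + C) z) R) → R₀ ≤ ‖z‖ →
        |z.im| < h * |z.re| ^ p := by
  obtain ⟨R, q, hR, hq0, hq1, hX⟩ := lemX p b M h 0 hp hp1 hb hbh hM hM0 le_rfl
  have hh : 0 < h := hb.trans hbh
  have hRp : 0 < R ^ p := Real.rpow_pos_of_pos (by linarith) p
  refine ⟨R + h * R ^ p + 1, by positivity, ?_⟩
  intro z hz hzn
  by_contra hcon
  push Not at hcon
  apply hz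
  have hm0 : 0 < max |z.re| R := lt_of_lt_of_le (by linarith) (le_max_right _ _)
  have habs : |max |z.re| R| = max |z.re| R := abs_of_pos hm0
  have hmp : 0 < (max |z.re| R) ^ p := Real.rpow_pos_of_pos hm0 p
  refine (nonreal_inv T.domain T.toFun C hS hnr (max |z.re| R) ((max |z.re| R) ^ p) h 0 q
    (by positivity) hq0 hq1 ?_ z ?_ ?_).2
  · intro y u hu h1 h2
    refine hX (max |z.re| R) ‖T.toFun y‖ ‖(y : H)‖ u _ ?_ (norm_nonneg _) hu (norm_nonneg _)
      ?_ ?_ (hC y)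
    · rw [habs]; exact le_max_right _ _
    · rw [habs]; exact h1
    · rw [habs]; rw [habs] at h2; exact h2
  · rw [habs, zero_mul, add_zero]; exact le_max_left _ _
  · rcases le_total R |z.re| with hc | hc
    · rw [max_eq_left hc]; exact hcon
    · rw [max_eq_right hc]
      have := Complex.norm_le_abs_re_add_abs_im z
      linarith

theorem part_two (T : H →ₗ.[ℂ] H) (C : T.domain →ₗ[ℂ] H)
    (hS : ∀ a b : T.domain, inner ℂ (T.toFun a) (b : H) = inner ℂ (a : H) (T.toFun b))
    (hnr : ∀ z : ℂ, z.im ≠ 0 → ∃ R, BInv T.domain (shft T.domain T.toFun z) R)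
    (p b M b₁ δ δ' d : ℝ) (hp : 0 ≤ p) (hp1 : p < 1) (hb : 0 < b) (hbd : b < d)
    (hM : 0 ≤ M) (hM0 : p = 0 → M = 0) (hb₁ : b₁ = δ' + d) (hδ0 : 0 < δ) (hδ : δ < δ')
    (hC : ∀ y : T.domain, ‖C y‖ ≤ b * ‖T.toFun y‖ ^ p * ‖(y : H)‖ ^ (1 - p) + M * ‖(y : H)‖)
    (m : ℕ) (ev : ℤ → Finset ℝ) (x : ℤ → ℝ)
    (hm : StrictMono x) (hx : ∀ n, b₁ * (|x n| ^ p + |x (n + 1)| ^ p) ≤ x (n + 1) - x n)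
    (hfd : ∀ k : ℤ, ∀ ν ∈ ev k, FiniteDimensional ℂ (pmEigenspace T (ν : ℂ)))
    (hres : ∀ k : ℤ, ∀ ν : ℝ, |ν - x k| < b₁ * |x k| ^ p → ν ∉ ev k →
      ∃ R, BInv T.domain (shft T.domain T.toFun (ν : ℂ)) R)
    (hmm : ∀ k : ℤ, (∑ ν ∈ ev k, Module.finrank ℂ (pmEigenspace T (ν : ℂ))) ≤ m) :
    ∃ N C₀ : ℕ, ∀ k : ℤ, (N : ℤ) ≤ |k| →
    (∀ z : ℂ, |z.re - x k| ≤ δ * |x k| ^ p →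
      (¬ ∃ R, BInv T.domain (shft T.domain (T.toFun + C) z) R) →
      ∃ x : T.domain, x ≠ 0 ∧ (T.toFun + C) x = z • (x : H)) ∧
    ∀ s : Finset H, (∀ v ∈ s, ∃ z : ℂ, (|z.re - x k| ≤ δ * |x k| ^ p ∧
        ¬ ∃ R, BInv T.domain (shft T.domain (T.toFun + C) z) R) ∧
        ∃ n, v ∈ GE T.domain (T.toFun + C) z n) →
      LinearIndependent ℂ (fun v : s => (v : H)) → s.card ≤ C₀ * m := by
  have hd : 0 < d := hb.trans hbd
  have hδ'0 : 0 < δ' := hδ0.trans hδ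
  have hb₁0 : 0 < b₁ := by rw [hb₁]; positivity
  obtain ⟨R, q, hR, hq0, hq1, hX⟩ := lemX p b M d (δ' + 2 * b₁) hp hp1 hb hbd hM hM0
    (by positivity)
  obtain ⟨R₁, κ₀, ψ, hR₁, hκ0, hκ1, hψd, hψr, hψs⟩ := conf_map δ δ' d hδ0 hδ hd
  obtain ⟨κ, hκ, hκ', hbl⟩ := mobius_bound κ₀ hκ0 hκ1
  obtain ⟨N, hN⟩ := r_lim p b₁ hp hp1 hb₁0 x hm hx R
  have h1q : 0 < 1 - q := by linarith
  set X : ℝ := 1 + 2 * b₁ / ((1 - q) * d) with hXdef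
  have hX0 : 0 < X := by positivity
  set F : ℝ := (m.factorial * X ^ m) * (m.factorial * X ^ m) with hF
  have hF0 : 0 < F := by
    have : (0 : ℝ) < m.factorial := by exact_mod_cast m.factorial_pos
    positivity
  obtain ⟨C₀, hC₀⟩ := exists_pow_lt_of_lt_one (inv_pos.mpr hF0) hκ'
  have hC₀' : F * κ ^ C₀ < 1 := by
    calc F * κ ^ C₀ < F * F⁻¹ := by gcongr
      _ = 1 := mul_inv_cancel₀ hF0.ne'
  refine ⟨N, C₀, fun k hk => ?_⟩
  have hrk := hN k hk
  have hρ : 0 < |x k| ^ p := Real.rpow_pos_of_pos (by linarith) p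
  exact gap_main T C hS hnr R₁ κ₀ κ δ δ' d X (x k) (|x k| ^ p) b₁ q m ψ hR₁ hκ1 hκ hκ' hbl hψd
    hψr hψs hδ0 hδ hd hb₁ hρ hq0 hq1 hXdef
    (fun y u hu h1 h2 => hX (x k) ‖T.toFun y‖ ‖(y : H)‖ u _ hrk (norm_nonneg _) hu
      (norm_nonneg _) h1 h2 (hC y)) (ev k) (hfd k) (hres k) (hmm k) C₀ hC₀'


/-- Let `T` be self-adjoint with essential spectrum in the pairwise disjoint
intervals `Δ_k = [α_{2k−1}, α_{2k}]`, `k ∈ ℤ`, whose gaps `Λ_k = (α_{2k}, α_{2k+1})` satisfy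
`α_{2k+1} − α_{2k} ≥ 2^{1−p} b₁ |α_{2k+1} + α_{2k}|^p`; outside the `Δ_k` the operator `T` has
only discrete spectrum, each gap containing at most `m` eigenvalues of `T` counted with
multiplicity.  Let `B` be `p`-subordinate to `T` with subordination bound `b' < b₁`, and
`A = T + B`.  Then: (i) for every `h > b'` the spectrum of `A` outside a large disk lies in
the double parabola `P_{p,h}`; (ii) for every `δ ∈ (0, b₁ − b')` there are `N ∈ ℕ` and `C`
(independent of `k`) such that for `|k| ≥ N` the strip `Ω_k = {|Re λ − r_k| ≤ δ|r_k|^p}`,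
`r_k = (α_{2k} + α_{2k+1})/2`, contains no spectrum of `A` except eigenvalues of total
algebraic multiplicity at most `C·m` (any linearly independent family of generalized
eigenvectors for eigenvalues in `Ω_k` has at most `C·m` elements). -/
theorem stmt2 (T B : H →ₗ.[ℂ] H) (p b₁ b' : ℝ) (hp : p ∈ Set.Ico (0 : ℝ) 1) (hb₁ : 0 < b₁)
    (hsa : IsSelfAdjoint T) (α : ℤ → ℝ) (hmono : Monotone α)
    (hdisj : ∀ k l : ℤ, k ≠ l →
      Disjoint (Set.Icc (α (2 * k - 1)) (α (2 * k))) (Set.Icc (α (2 * l - 1)) (α (2 * l))))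
    (hgap : ∀ k : ℤ,
      (2 : ℝ) ^ (1 - p) * b₁ * |α (2 * k + 1) + α (2 * k)| ^ p ≤ α (2 * k + 1) - α (2 * k))
    (m : ℕ) (ev : ℤ → Finset ℝ)
    (hev : ∀ k : ℤ, (ev k : Set ℝ) ⊆ Set.Ioo (α (2 * k)) (α (2 * k + 1)))
    (hspec : pmSpectrum T ⊆
      (⋃ k : ℤ, Complex.ofReal '' Set.Icc (α (2 * k - 1)) (α (2 * k))) ∪
        ⋃ k : ℤ, Complex.ofReal '' (ev k : Set ℝ))
    (hfd : ∀ k : ℤ, ∀ ν ∈ ev k, FiniteDimensional ℂ (pmEigenspace T (ν : ℂ)))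
    (hm : ∀ k : ℤ, (∑ ν ∈ ev k, Module.finrank ℂ (pmEigenspace T (ν : ℂ))) ≤ m)
    (hle : T.domain ≤ B.domain) (hb' : IsGLB (SubordSet T B hle p) b') (hbb : b' < b₁) :
    (∀ h : ℝ, b' < h → ∃ R₀ : ℝ, 0 < R₀ ∧
      ∀ z ∈ pmSpectrum (pmSum T B hle), R₀ ≤ ‖z‖ → |z.im| < h * |z.re| ^ p) ∧
    ∀ δ : ℝ, 0 < δ → δ < b₁ - b' →
      ∃ (N : ℕ) (C : ℕ), 0 < C ∧
        ∀ k : ℤ, (N : ℤ) ≤ |k| →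
          (∀ z ∈ pmSpectrum (pmSum T B hle),
            |z.re - (α (2 * k) + α (2 * k + 1)) / 2| ≤
                δ * |(α (2 * k) + α (2 * k + 1)) / 2| ^ p →
              ∃ x : H, x ≠ 0 ∧ ∃ hx : x ∈ (pmSum T B hle).domain,
                (pmSum T B hle) ⟨x, hx⟩ = z • x) ∧
          ∀ s : Finset H,
            (↑s ⊆ ⋃ z ∈ {z ∈ pmSpectrum (pmSum T B hle) |
                |z.re - (α (2 * k) + α (2 * k + 1)) / 2| ≤
                  δ * |(α (2 * k) + α (2 * k + 1)) / 2| ^ p},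
              ⋃ n : ℕ, pmGenEig (pmSum T B hle) z n) →
            LinearIndependent ℂ (fun v : s => (v : H)) → s.card ≤ C * m := by
  have hp0 := hp.1
  have hp1 := hp.2
  have hS : ∀ a b : T.domain, inner ℂ (T.toFun a) (b : H) = inner ℂ (a : H) (T.toFun b) := by
    have h1 := LinearPMap.adjoint_isFormalAdjoint hsa.dense_domain
    rw [LinearPMap.isSelfAdjoint_def.mp hsa] at h1
    exact fun a b => h1 a b
  have hnr : ∀ z : ℂ, z.im ≠ 0 → ∃ R, BInv T.domain (shft T.domain T.toFun z) R := by
    intro z hz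
    by_contra hcon
    have hzs : z ∈ pmSpectrum T := hcon
    rcases hspec hzs with h1 | h1
    · obtain ⟨k, y, -, rfl⟩ := Set.mem_iUnion.mp h1
      exact hz (Complex.ofReal_im y)
    · obtain ⟨k, y, -, rfl⟩ := Set.mem_iUnion.mp h1
      exact hz (Complex.ofReal_im y)
  have hlt : ∀ k : ℤ, α (2 * k) < α (2 * k + 1) := by
    intro k
    by_contra hcon
    push Not at hcon
    have h1 := hdisj k (k + 1) (by omega)
    have e1 : 2 * (k + 1) - 1 = 2 * k + 1 := by ring
    rw [e1] at h1
    have h2 : α (2 * k) ∈ Set.Icc (α (2 * k - 1)) (α (2 * k)) := ⟨hmono (by omega), le_rfl⟩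
    exact Set.disjoint_left.mp h1 h2
      ⟨hcon, hmono (by omega)⟩
  have hhalf : ∀ k : ℤ, b₁ * |(α (2 * k) + α (2 * k + 1)) / 2| ^ p
      ≤ (α (2 * k + 1) - α (2 * k)) / 2 := fun k => half_gap p b₁ _ _ (hgap k)
  have hnext : ∀ k : ℤ, α (2 * k + 1) ≤ α (2 * (k + 1)) := fun k => hmono (by omega)
  constructor
  · intro h hh
    obtain ⟨b, ⟨hb0, M, hM, hM0, hsub⟩, hbh⟩ := (isGLB_lt_iff hb').mp hh
    obtain ⟨R₀, hR₀, hz⟩ := part_one T (B.toFun.comp (Submodule.inclusion hle)) hS hnr p b M h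
      hp0 hp1 hb0 hbh hM hM0 hsub
    exact ⟨R₀, hR₀, fun z hzs => hz z hzs⟩
  · intro δ hδ0 hδ
    set δ' : ℝ := (δ + (b₁ - b')) / 2 with hδ'
    have h1 : δ < δ' := by rw [hδ']; linarith
    have h2 : b' < b₁ - δ' := by rw [hδ']; linarith
    obtain ⟨b, ⟨hb0, M, hM, hM0, hsub⟩, hbd⟩ := (isGLB_lt_iff hb').mp h2
    obtain ⟨N, C₀, hmain⟩ := part_two T (B.toFun.comp (Submodule.inclusion hle)) hS hnr p b M b₁ δ
      δ' (b₁ - δ') hp0 hp1 hb0 hbd hM hM0 (by ring) hδ0 h1 hsub m ev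
      (fun k => (α (2 * k) + α (2 * k + 1)) / 2)
      (strictMono_int_of_lt_succ (fun k => by
        have e1 := hlt k
        have e2 := hlt (k + 1)
        have e3 := hnext k
        linarith))
      (fun k => by
        have e1 := hhalf k
        have e2 := hhalf (k + 1)
        have e3 := hnext k
        rw [mul_add]
        linarith)
      hfd
      (fun k ν hν hνe => by
        have e1 := hhalf k
        obtain ⟨hν1, hν2⟩ := abs_lt.mp hν
        have hl : α (2 * k) < ν := by linarith
        have hu : ν < α (2 * k + 1) := by linarith
        by_contra hcon
        have hzs : (ν : ℂ) ∈ pmSpectrum T := hcon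
        rcases hspec hzs with h3 | h3
        · obtain ⟨l, y, hy, hyν⟩ := Set.mem_iUnion.mp h3
          have hyν' : y = ν := Complex.ofReal_injective hyν
          rw [hyν'] at hy
          rcases le_or_gt l k with hlk | hlk
          · have : α (2 * l) ≤ α (2 * k) := hmono (by omega)
            linarith [hy.2]
          · have : α (2 * k + 1) ≤ α (2 * l - 1) := hmono (by omega)
            linarith [hy.1]
        · obtain ⟨l, y, hy, hyν⟩ := Set.mem_iUnion.mp h3
          have hyν' : y = ν := Complex.ofReal_injective hyν
          rw [hyν'] at hy
          have hy' := hev l hy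
          rcases lt_trichotomy l k with hlk | hlk | hlk
          · have : α (2 * l + 1) ≤ α (2 * k) := hmono (by omega)
            linarith [hy'.2]
          · rw [hlk] at hy
            exact hνe hy
          · have : α (2 * k + 1) ≤ α (2 * l) := hmono (by omega)
            linarith [hy'.1])
      hm
    refine ⟨N, C₀ + 1, Nat.succ_pos _, fun k hk => ?_⟩
    obtain ⟨hA, hB⟩ := hmain k hk
    constructor
    · intro z hz hzr
      obtain ⟨x, hx0, hx⟩ := hA z hzr hz
      exact ⟨(x : H), fun h0 => hx0 (Subtype.ext h0), x.2, hx⟩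
    · intro s hs hli
      have h3 : s.card ≤ C₀ * m := by
        refine hB s ?_ hli
        intro v hv
        have h4 := hs hv
        simp only [Set.mem_iUnion] at h4
        obtain ⟨z, ⟨hz1, hz2⟩, n, hn⟩ := h4
        exact ⟨z, ⟨hz2, hz1⟩, n, (mem_GE _ z n v).mp hn⟩
      exact h3.trans (Nat.mul_le_mul_right m (Nat.le_succ _))
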